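/- Let d ≥ 2, κ > 0, and let T₁, T₂ ⊂ ℝ^d be nondegenerate d-simplices with disjoint interiors sharing a common face F = T₁ ∩ T₂, each with shape parameter at most μ; set h := max{diam T₁, diam T₂} and ω_F := int(T₁ ∪ T₂). There exist constants c, C > 0 depending only on d and μ such that for every affine function j : ℝ^d → ℝ: c · min{h, κ^{−1}}^{1/2} · ‖j‖_{L²(F)} ≤ sup{ ∫_F j φ dH^{d−1} : φ ∈ T(ω_F), ‖φ‖_{E,ω_F} ≤ 1 } ≤ C · min{h, κ^{−1}}^{1/2} · ‖j‖_{L²(F)}. -/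

import Mathlib

open MeasureTheory Metric Set
open scoped ENNReal RealInnerProductSpace NNReal Classical

noncomputable section

abbrev Euc (d : ℕ) : Type := EuclideanSpace ℝ (Fin d)

/-- `T(ω)`: Lipschitz functions on `ℝ^d` vanishing identically outside `ω`. -/
def IsTest {d : ℕ} (ω : Set (Euc d)) (φ : Euc d → ℝ) : Prop :=
  (∃ L : ℝ≥0, LipschitzWith L φ) ∧ ∀ x ∉ ω, φ x = 0

/-- `∫_ω |∇φ|²`. -/
def gradSq {d : ℕ} (ω : Set (Euc d)) (φ : Euc d → ℝ) : ℝ :=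
  ∫ x in ω, ‖gradient φ x‖ ^ 2

/-- `∫_ω φ²`. -/
def sqIntg {d : ℕ} (ω : Set (Euc d)) (φ : Euc d → ℝ) : ℝ :=
  ∫ x in ω, (φ x) ^ 2

/-- squared energy norm `‖φ‖_{E,ω}² = ∫_ω |∇φ|² + κ² ∫_ω φ²`. -/
def energySq {d : ℕ} (κ : ℝ) (ω : Set (Euc d)) (φ : Euc d → ℝ) : ℝ :=
  gradSq ω φ + κ ^ 2 * sqIntg ω φ

/-- local dual norm `‖Λ‖_{*,ω} = sup {Λφ : φ ∈ T(ω), ‖φ‖_{E,ω} ≤ 1}`. -/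
def dualNorm {d : ℕ} (κ : ℝ) (ω : Set (Euc d)) (Λ : (Euc d → ℝ) → ℝ) : ℝ≥0∞ :=
  ⨆ φ ∈ {φ : Euc d → ℝ | IsTest ω φ ∧ energySq κ ω φ ≤ 1}, ENNReal.ofReal (Λ φ)

/-- inradius: supremum of radii of balls contained in `s`. -/
def inradius {d : ℕ} (s : Set (Euc d)) : ℝ :=
  sSup {r : ℝ | ∃ c, Metric.ball c r ⊆ s}

/-- the simplex spanned by an affine basis. -/
def simT {d : ℕ} (B : AffineBasis (Fin (d+1)) ℝ (Euc d)) : Set (Euc d) :=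
  convexHull ℝ (Set.range ⇑B)

/-- the face of the simplex opposite to the vertex `z`. -/
def simFace {d : ℕ} (B : AffineBasis (Fin (d+1)) ℝ (Euc d)) (z : Fin (d+1)) : Set (Euc d) :=
  convexHull ℝ (⇑B '' {y | y ≠ z})

/-- the standard `d`-simplex. -/
def Δstd (d : ℕ) : Set (Euc d) := {x | (∀ i, 0 ≤ x i) ∧ ∑ i, x i ≤ 1}

/-- the element bubble of the standard simplex. -/
def elemBubble (d : ℕ) (x : Euc d) : ℝ := (1 - ∑ i, x i) * ∏ i, x i

/-!
Upper bound: on the normal line through a point of `F`, let `f` be the restriction of a test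
function `φ` up to the point where the line leaves the patch, at distance `b ≤ h`; there `f`
vanishes. Expanding `0 ≤ ∫ (f' + κ f)²` and `0 ≤ ∫ (f' + f(0) / b)²` gives
`f(0)² ≤ min{b, κ⁻¹} ∫ (f'² + κ² f²)`. Integration over `F` bounds `‖φ‖_{L²(F)}` by
`min{h, κ⁻¹}^{1/2}` times the energy norm, and Cauchy–Schwarz concludes.

Lower bound: shape regularity puts a ball of radius comparable to `h` around the centroid of `F`
inside the patch. Contracting this ball towards a maximum point of `|j|` on `F` yields a ball of
radius `ρ`, still comparable to `h`, on which `|j|` is at least half its maximum along `F`. A tent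
function on this ball, squeezed to thickness `min{ρ, κ⁻¹}` in the normal direction, is an almost
optimal test function.

Mathlib's `μH[m]` is a fixed multiple of the measure `μHE[m]` that agrees with Lebesgue measure on
`m`-dimensional subspaces. Integrals over `F` are computed with the latter, and the multiple is
absorbed in the constants.
-/

section IntervalTrace

variable {f : ℝ → ℝ} {a b : ℝ}

lemma sq_le_length_mul_integral_deriv_sq (hab : a < b) (hf : AbsolutelyContinuousOnInterval f a b)
    (hf' : IntervalIntegrable (fun t => deriv f t ^ 2) volume a b) (hfb : f b = 0) :
    f a ^ 2 ≤ (b - a) * ∫ t in a..b, deriv f t ^ 2 := by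
  have hba : 0 < b - a := sub_pos.2 hab
  set s := f a / (b - a)
  have hfa : f a = s * (b - a) := (div_mul_cancel₀ _ hba.ne').symm
  have hi := hf.intervalIntegrable_deriv
  have expand : ∫ t in a..b, (deriv f t + s) ^ 2
      = (∫ t in a..b, deriv f t ^ 2) - s ^ 2 * (b - a) := by
    have hsq : ∀ t, (deriv f t + s) ^ 2 = deriv f t ^ 2 + 2 * s * deriv f t + s ^ 2 :=
      fun t => by ring
    simp_rw [hsq]
    rw [intervalIntegral.integral_add (hf'.add (hi.const_mul _)) intervalIntegrable_const,
      intervalIntegral.integral_add hf' (hi.const_mul _), intervalIntegral.integral_const_mul,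
      hf.integral_deriv_eq_sub, hfb, hfa, intervalIntegral.integral_const, smul_eq_mul]
    ring
  have nonneg : 0 ≤ ∫ t in a..b, (deriv f t + s) ^ 2 :=
    intervalIntegral.integral_nonneg hab.le fun _ _ => sq_nonneg _
  calc f a ^ 2 = (b - a) * (s ^ 2 * (b - a)) := by rw [hfa]; ring
    _ ≤ (b - a) * ∫ t in a..b, deriv f t ^ 2 := by gcongr; linarith

lemma mul_sq_le_integral_deriv_sq_add (hab : a ≤ b) (hf : AbsolutelyContinuousOnInterval f a b)
    (hf' : IntervalIntegrable (fun t => deriv f t ^ 2) volume a b) (hfb : f b = 0) (κ : ℝ) :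
    κ * f a ^ 2 ≤ ∫ t in a..b, (deriv f t ^ 2 + κ ^ 2 * f t ^ 2) := by
  have hfc : ContinuousOn f (uIcc a b) := hf.continuousOn
  have hf2 : IntervalIntegrable (fun t => κ ^ 2 * f t ^ 2) volume a b :=
    (continuousOn_const.mul (hfc.pow 2)).intervalIntegrable
  have hff' : IntervalIntegrable (fun t => deriv f t * f t) volume a b :=
    hf.intervalIntegrable_deriv.mul_continuousOn hfc
  have by_parts : 2 * ∫ t in a..b, deriv f t * f t = - f a ^ 2 := by
    have h := hf.integral_deriv_mul_eq_sub hf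
    simp only [mul_comm (f _) (deriv f _), ← two_mul, hfb] at h
    rw [intervalIntegral.integral_const_mul] at h
    linarith
  have expand : ∫ t in a..b, (deriv f t + κ * f t) ^ 2
      = (∫ t in a..b, (deriv f t ^ 2 + κ ^ 2 * f t ^ 2)) - κ * f a ^ 2 := by
    have hsq : ∀ t, (deriv f t + κ * f t) ^ 2
        = (deriv f t ^ 2 + κ ^ 2 * f t ^ 2) + 2 * κ * (deriv f t * f t) := fun t => by ring
    simp_rw [hsq]
    rw [intervalIntegral.integral_add (hf'.add hf2) (hff'.const_mul _),
      intervalIntegral.integral_const_mul]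
    linear_combination κ * by_parts
  have nonneg : 0 ≤ ∫ t in a..b, (deriv f t + κ * f t) ^ 2 :=
    intervalIntegral.integral_nonneg hab fun _ _ => sq_nonneg _
  linarith

lemma sq_le_min_mul_integral_deriv_sq_add (hab : a < b) (hf : AbsolutelyContinuousOnInterval f a b)
    (hf' : IntervalIntegrable (fun t => deriv f t ^ 2) volume a b) (hfb : f b = 0)
    {κ : ℝ} (hκ : 0 < κ) :
    f a ^ 2 ≤ min (b - a) κ⁻¹ * ∫ t in a..b, (deriv f t ^ 2 + κ ^ 2 * f t ^ 2) := by
  have hf2 : IntervalIntegrable (fun t => κ ^ 2 * f t ^ 2) volume a b :=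
    (continuousOn_const.mul (hf.continuousOn.pow 2)).intervalIntegrable
  rcases min_choice (b - a) κ⁻¹ with hmin | hmin <;> rw [hmin]
  · calc f a ^ 2 ≤ (b - a) * ∫ t in a..b, deriv f t ^ 2 :=
          sq_le_length_mul_integral_deriv_sq hab hf hf' hfb
      _ ≤ (b - a) * ∫ t in a..b, (deriv f t ^ 2 + κ ^ 2 * f t ^ 2) := by
          refine mul_le_mul_of_nonneg_left ?_ (sub_pos.2 hab).le
          exact intervalIntegral.integral_mono_on hab.le hf' (hf'.add hf2)
            fun t _ => le_add_of_nonneg_right (by positivity)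
  · rw [inv_mul_eq_div, le_div_iff₀' hκ]
    exact mul_sq_le_integral_deriv_sq_add hab.le hf hf' hfb κ

lemma intervalIntegrable_deriv_sq_of_lipschitzWith {K : ℝ≥0} (hf : LipschitzWith K f) (a b : ℝ) :
    IntervalIntegrable (fun t => deriv f t ^ 2) volume a b := by
  refine intervalIntegrable_const (c := (K : ℝ) ^ 2) |>.mono_fun
    ((measurable_deriv f).pow_const 2).aestronglyMeasurable (.of_forall fun t => ?_)
  simpa using pow_le_pow_left₀ (norm_nonneg _) (norm_deriv_le_of_lipschitz hf (x₀ := t)) 2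

end IntervalTrace

lemma integral_mul_le_sqrt_mul_sqrt {X : Type*} [MeasurableSpace X] {ν : Measure X} {f g : X → ℝ}
    (hf : MemLp f 2 ν) (hg : MemLp g 2 ν) :
    ∫ x, f x * g x ∂ν ≤ √(∫ x, f x ^ 2 ∂ν) * √(∫ x, g x ^ 2 ∂ν) := by
  have holder := integral_mul_norm_le_Lp_mul_Lq (μ := ν) Real.HolderConjugate.two_two
    (by simpa using hf) (by simpa using hg)
  simp only [Real.rpow_two, Real.norm_eq_abs, sq_abs, ← Real.sqrt_eq_rpow] at holder
  calc ∫ x, f x * g x ∂ν ≤ ∫ x, ‖f x * g x‖ ∂ν :=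
        integral_mono (hf.integrable_mul hg) (hf.integrable_mul hg).norm fun x => le_abs_self _
    _ ≤ √(∫ x, f x ^ 2 ∂ν) * √(∫ x, g x ^ 2 ∂ν) := by
        simpa only [norm_mul, Real.norm_eq_abs] using holder

lemma integrableOn_of_continuous_of_isBounded {X F : Type*} [MetricSpace X] [ProperSpace X]
    [MeasurableSpace X] [OpensMeasurableSpace X] [NormedAddCommGroup F] {ν : Measure X}
    [IsFiniteMeasureOnCompacts ν] {f : X → F} {s : Set X} (hf : Continuous f)
    (hs : Bornology.IsBounded s) : IntegrableOn f s ν :=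
  (hf.continuousOn.integrableOn_compact hs.isCompact_closure).mono_set subset_closure

section Energy

section

variable {E : Type*} [NormedAddCommGroup E] [InnerProductSpace ℝ E] [CompleteSpace E]

/-- The integrand `|∇φ|² + κ²φ²` of the squared energy norm. -/
def energyDensity (κ : ℝ) (φ : E → ℝ) (x : E) : ℝ := ‖gradient φ x‖ ^ 2 + κ ^ 2 * φ x ^ 2

lemma energyDensity_nonneg (κ : ℝ) (φ : E → ℝ) (x : E) : 0 ≤ energyDensity κ φ x := by
  unfold energyDensity
  positivity

lemma norm_gradient_eq_norm_fderiv (φ : E → ℝ) (x : E) : ‖gradient φ x‖ = ‖fderiv ℝ φ x‖ :=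
  LinearIsometryEquiv.norm_map _ _

variable [FiniteDimensional ℝ E] [MeasurableSpace E] [BorelSpace E] {ν : Measure E}
  [IsLocallyFiniteMeasure ν] {ω : Set E} {φ : E → ℝ} {K : ℝ≥0}

lemma integrableOn_norm_gradient_sq (hφ : LipschitzWith K φ) (hω : Bornology.IsBounded ω) :
    IntegrableOn (fun x => ‖gradient φ x‖ ^ 2) ω ν := by
  simp_rw [norm_gradient_eq_norm_fderiv]
  refine Measure.integrableOn_of_bounded (M := (K : ℝ) ^ 2) hω.measure_lt_top.ne
    ((measurable_fderiv ℝ φ).norm.pow_const 2).aestronglyMeasurable (.of_forall fun x => ?_)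
  rw [norm_pow, norm_norm]
  exact pow_le_pow_left₀ (norm_nonneg _) (norm_fderiv_le_of_lipschitz ℝ hφ) 2

lemma integrableOn_energyDensity (hφ : LipschitzWith K φ) (hω : Bornology.IsBounded ω) (κ : ℝ) :
    IntegrableOn (energyDensity κ φ) ω ν :=
  (integrableOn_norm_gradient_sq hφ hω).add
    ((integrableOn_of_continuous_of_isBounded (hφ.continuous.pow 2) hω).const_mul _)

end

variable {d : ℕ} {ω : Set (Euc d)} {φ : Euc d → ℝ} {K : ℝ≥0}

lemma energySq_eq_setIntegral (hφ : LipschitzWith K φ) (hω : Bornology.IsBounded ω) (κ : ℝ) :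
    energySq κ ω φ = ∫ x in ω, energyDensity κ φ x := by
  have hsq : IntegrableOn (fun x => φ x ^ 2) ω :=
    integrableOn_of_continuous_of_isBounded (hφ.continuous.pow 2) hω
  unfold energyDensity
  rw [integral_add (integrableOn_norm_gradient_sq hφ hω) (hsq.const_mul _), integral_const_mul]
  rfl

lemma energySq_const_smul (κ c : ℝ) (ω : Set (Euc d)) (φ : Euc d → ℝ) :
    energySq κ ω (c • φ) = c ^ 2 * energySq κ ω φ := by
  simp only [energySq, gradSq, sqIntg, norm_gradient_eq_norm_fderiv, fderiv_const_smul_field,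
    Pi.smul_apply, smul_eq_mul, norm_smul, Real.norm_eq_abs, mul_pow, sq_abs, integral_const_mul]
  ring

lemma IsTest.const_smul (hφ : IsTest ω φ) (c : ℝ) : IsTest ω (c • φ) := by
  obtain ⟨⟨L, hL⟩, hφ0⟩ := hφ
  exact ⟨⟨_, (lipschitzWith_smul c).comp hL⟩, fun x hx => by simp [hφ0 x hx]⟩

end Energy

section DualNorm

variable {d : ℕ} {κ : ℝ} {ω : Set (Euc d)} {Λ : (Euc d → ℝ) → ℝ} {φ : Euc d → ℝ}

lemma dualNorm_const_mul {a : ℝ} (ha : 0 ≤ a) (κ : ℝ) (ω : Set (Euc d)) (Λ : (Euc d → ℝ) → ℝ) :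
    dualNorm κ ω (fun φ => a * Λ φ) = ENNReal.ofReal a * dualNorm κ ω Λ := by
  simp only [dualNorm, ENNReal.mul_iSup, ENNReal.ofReal_mul ha]

lemma dualNorm_le_ofReal {C : ℝ} (hC : 0 ≤ C)
    (hΛ : ∀ φ, IsTest ω φ → Λ φ ≤ C * √(energySq κ ω φ)) :
    dualNorm κ ω Λ ≤ ENNReal.ofReal C :=
  iSup₂_le fun φ hφ => ENNReal.ofReal_le_ofReal <| (hΛ φ hφ.1).trans <|
    mul_le_of_le_one_right hC (Real.sqrt_le_one.2 hφ.2)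

lemma ofReal_abs_div_sqrt_le_dualNorm (hΛ : ∀ (c : ℝ) φ, Λ (c • φ) = c * Λ φ) (hφ : IsTest ω φ)
    {e : ℝ} (he : 0 < e) (hφe : energySq κ ω φ ≤ e) :
    ENNReal.ofReal (|Λ φ| / √e) ≤ dualNorm κ ω Λ := by
  obtain ⟨σ, hσ, hσΛ⟩ : ∃ σ : ℝ, σ ^ 2 = 1 ∧ |Λ φ| = σ * Λ φ := by
    rcases abs_choice (Λ φ) with h | h
    exacts [⟨1, by norm_num, by simpa using h⟩, ⟨-1, by norm_num, by simpa using h⟩]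
  have unit : energySq κ ω ((σ / √e) • φ) ≤ 1 := by
    rw [energySq_const_smul, div_pow, hσ, Real.sq_sqrt he.le, one_div, inv_mul_le_one₀ he]
    exact hφe
  refine le_iSup₂_of_le ((σ / √e) • φ) ⟨hφ.const_smul _, unit⟩ (le_of_eq ?_)
  rw [hΛ, hσΛ, mul_div_right_comm]

end DualNorm

section NormalCoordinates

variable {E : Type*} [NormedAddCommGroup E] [InnerProductSpace ℝ E] {n : E}

lemma range_const_add_orthogonal (n x₀ : E) :
    range (fun y : (ℝ ∙ n)ᗮ => x₀ + (y : E)) = {x | ⟪n, x - x₀⟫ = 0} := by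
  ext x
  constructor
  · rintro ⟨y, rfl⟩
    simpa using Submodule.mem_orthogonal_singleton_iff_inner_right.1 y.2
  · intro hx
    exact ⟨⟨x - x₀, Submodule.mem_orthogonal_singleton_iff_inner_right.2 hx⟩,
      add_sub_cancel x₀ x⟩

lemma isometry_const_add_orthogonal (n x₀ : E) :
    Isometry (fun y : (ℝ ∙ n)ᗮ => x₀ + (y : E)) :=
  (isometry_add_left x₀).comp (ℝ ∙ n)ᗮ.subtypeₗᵢ.isometry

lemma norm_le_norm_orthogonal_add_smul (y : (ℝ ∙ n)ᗮ) (t : ℝ) : ‖y‖ ≤ ‖(y : E) + t • n‖ := by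
  have hyn : ⟪(y : E), n⟫ = 0 := Submodule.mem_orthogonal_singleton_iff_inner_left.1 y.2
  refine (pow_le_pow_iff_left₀ (norm_nonneg _) (norm_nonneg _) two_ne_zero).1 ?_
  rw [norm_add_sq_real, inner_smul_right, hyn, Submodule.norm_coe]
  linarith [sq_nonneg ‖t • n‖]

lemma inner_orthogonal_add_smul (hn : ‖n‖ = 1) (y : (ℝ ∙ n)ᗮ) (t : ℝ) :
    ⟪n, (y : E) + t • n⟫ = t := by
  have hyn : ⟪n, (y : E)⟫ = 0 := Submodule.mem_orthogonal_singleton_iff_inner_right.1 y.2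
  rw [inner_add_right, hyn, inner_smul_right, real_inner_self_eq_norm_sq, hn]
  simp

variable {m : ℕ} {F : Set E} {x₀ : E}

lemma finrank_orthogonal_span_unit (hE : Module.finrank ℝ E = m + 1) (hn : ‖n‖ = 1) :
    Module.finrank ℝ (ℝ ∙ n)ᗮ = m :=
  have : Fact (Module.finrank ℝ E = m + 1) := ⟨hE⟩
  Submodule.finrank_orthogonal_span_singleton (norm_ne_zero_iff.1 (hn ▸ one_ne_zero))

variable [FiniteDimensional ℝ E] [MeasurableSpace E] [BorelSpace E]

lemma measurePreserving_orthogonal_add_smul (hn : ‖n‖ = 1) (x₀ : E) :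
    MeasurePreserving (fun p : (ℝ ∙ n)ᗮ × ℝ => x₀ + ((p.1 : E) + p.2 • n)) := by
  have hprod : MeasurePreserving
      (Prod.map (LinearIsometryEquiv.toSpanUnitSingleton n hn) id :
        ℝ × (ℝ ∙ n)ᗮ → (ℝ ∙ n) × (ℝ ∙ n)ᗮ) :=
    (LinearIsometryEquiv.measurePreserving _).prod (.id _)
  have factor : (fun p : (ℝ ∙ n)ᗮ × ℝ => x₀ + ((p.1 : E) + p.2 • n))
      = (x₀ + ·) ∘ (ℝ ∙ n).orthogonalDecomposition.symm ∘ WithLp.toLp 2 ∘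
        Prod.map (LinearIsometryEquiv.toSpanUnitSingleton n hn) id ∘ Prod.swap := by
    funext p
    simp [LinearIsometryEquiv.toSpanUnitSingleton, add_comm]
  rw [factor]
  exact (measurePreserving_add_left volume x₀).comp <|
    (LinearIsometryEquiv.measurePreserving _).comp <|
    (WithLp.volume_preserving_toLp _ _).comp <| hprod.comp Measure.measurePreserving_swap

lemma measurableEmbedding_orthogonal_add_smul (hn : ‖n‖ = 1) (x₀ : E) :
    MeasurableEmbedding (fun p : (ℝ ∙ n)ᗮ × ℝ => x₀ + ((p.1 : E) + p.2 • n)) := by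
  refine Continuous.measurableEmbedding (by fun_prop) ?_
  rintro ⟨y, t⟩ ⟨y', t'⟩ h
  have h' : (y : E) + t • n = y' + t' • n := add_left_cancel h
  have ht : t = t' := by simpa [inner_orthogonal_add_smul hn] using congrArg (⟪n, ·⟫) h'
  subst ht
  exact Prod.ext (Subtype.ext (add_right_cancel h')) rfl

lemma map_const_add_orthogonal_volume (hE : Module.finrank ℝ E = m + 1) (hn : ‖n‖ = 1) (x₀ : E) :
    (volume : Measure (ℝ ∙ n)ᗮ).map (fun y : (ℝ ∙ n)ᗮ => x₀ + (y : E))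
      = μHE[m].restrict {x | ⟪n, x - x₀⟫ = 0} := by
  rw [← InnerProductSpace.euclideanHausdorffMeasure_eq_volume, finrank_orthogonal_span_unit hE hn,
    (isometry_const_add_orthogonal n x₀).map_euclideanHausdorffMeasure,
    range_const_add_orthogonal]

lemma euclideanHausdorffMeasure_restrict_eq_map (hE : Module.finrank ℝ E = m + 1) (hn : ‖n‖ = 1)
    (hF : MeasurableSet F) (hFn : ∀ x ∈ F, ⟪n, x - x₀⟫ = 0) :
    (μHE[m] : Measure E).restrict F
      = (volume.restrict {y : (ℝ ∙ n)ᗮ | x₀ + (y : E) ∈ F}).map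
          (fun y : (ℝ ∙ n)ᗮ => x₀ + (y : E)) := by
  rw [← Measure.restrict_restrict_of_subset (t := {x | ⟪n, x - x₀⟫ = 0}) hFn,
    ← map_const_add_orthogonal_volume hE hn,
    Measure.restrict_map (isometry_const_add_orthogonal n x₀).continuous.measurable hF]
  rfl

lemma setIntegral_euclideanHausdorffMeasure (hE : Module.finrank ℝ E = m + 1) (hn : ‖n‖ = 1)
    (hF : MeasurableSet F) (hFn : ∀ x ∈ F, ⟪n, x - x₀⟫ = 0) (f : E → ℝ) :
    ∫ x in F, f x ∂μHE[m] = ∫ y in {y : (ℝ ∙ n)ᗮ | x₀ + (y : E) ∈ F}, f (x₀ + y) := by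
  rw [euclideanHausdorffMeasure_restrict_eq_map hE hn hF hFn,
    (isometry_const_add_orthogonal n x₀).isClosedEmbedding.measurableEmbedding.integral_map]

lemma euclideanHausdorffMeasure_eq_volume_preimage (hE : Module.finrank ℝ E = m + 1)
    (hn : ‖n‖ = 1) (hF : MeasurableSet F) (hFn : ∀ x ∈ F, ⟪n, x - x₀⟫ = 0) :
    μHE[m] F = volume {y : (ℝ ∙ n)ᗮ | x₀ + (y : E) ∈ F} := by
  have hmeas := (isometry_const_add_orthogonal n x₀).continuous.measurable
  rw [← Measure.restrict_apply_univ, euclideanHausdorffMeasure_restrict_eq_map hE hn hF hFn,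
    Measure.map_apply hmeas .univ, preimage_univ, Measure.restrict_apply_univ]

end NormalCoordinates

section DiscVolume

variable {E : Type*} [NormedAddCommGroup E] [InnerProductSpace ℝ E] {n x₀ : E} {m : ℕ}
  {F : Set E} {r : ℝ}

/-- The disc of radius `r` about `x₀` in the hyperplane through `x₀` with normal `n`. -/
def disc (n x₀ : E) (r : ℝ) : Set E := {x | ⟪n, x - x₀⟫ = 0} ∩ closedBall x₀ r

/-- The closed cylinder obtained by cutting the ball of radius `r` about `x₀` down to thickness `δ`
on either side of the hyperplane through `x₀` with normal `n`. -/
def slab (n x₀ : E) (r δ : ℝ) : Set E := {x | |⟪n, x - x₀⟫| ≤ δ} ∩ closedBall x₀ r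

lemma isClosed_disc (n x₀ : E) (r : ℝ) : IsClosed (disc n x₀ r) :=
  (isClosed_eq (by fun_prop) continuous_const).inter isClosed_closedBall

lemma isClosed_slab (n x₀ : E) (r δ : ℝ) : IsClosed (slab n x₀ r δ) :=
  (isClosed_le (by fun_prop) continuous_const).inter isClosed_closedBall

lemma preimage_const_add_orthogonal_closedBall (n x₀ : E) (r : ℝ) :
    {y : (ℝ ∙ n)ᗮ | x₀ + (y : E) ∈ closedBall x₀ r} = closedBall 0 r := by
  ext y
  simp [mem_closedBall, dist_eq_norm]

variable [FiniteDimensional ℝ E] [MeasurableSpace E] [BorelSpace E]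

/-- The volume of the unit ball of the hyperplane orthogonal to `n`. -/
def unitDiscVolume (n : E) : ℝ := volume.real (ball (0 : (ℝ ∙ n)ᗮ) 1)

lemma unitDiscVolume_pos (n : E) : 0 < unitDiscVolume n :=
  ENNReal.toReal_pos (measure_ball_pos _ _ one_pos).ne' measure_ball_lt_top.ne

lemma volume_real_closedBall_orthogonal (hE : Module.finrank ℝ E = m + 1) (hn : ‖n‖ = 1)
    (hr : 0 ≤ r) :
    volume.real (closedBall (0 : (ℝ ∙ n)ᗮ) r) = unitDiscVolume n * r ^ m := by
  rw [Measure.addHaar_real_closedBall _ _ hr, finrank_orthogonal_span_unit hE hn, mul_comm,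
    unitDiscVolume]

lemma euclideanHausdorffMeasure_lt_top (hE : Module.finrank ℝ E = m + 1) (hn : ‖n‖ = 1)
    (hF : MeasurableSet F) (hFn : ∀ x ∈ F, ⟪n, x - x₀⟫ = 0) (hFb : Bornology.IsBounded F) :
    μHE[m] F < ∞ := by
  rw [euclideanHausdorffMeasure_eq_volume_preimage hE hn hF hFn]
  exact ((isometry_const_add_orthogonal n x₀).antilipschitz.isBounded_preimage hFb).measure_lt_top

lemma euclideanHausdorffMeasure_real_le (hE : Module.finrank ℝ E = m + 1) (hn : ‖n‖ = 1)
    (hF : MeasurableSet F) (hFn : ∀ x ∈ F, ⟪n, x - x₀⟫ = 0) (hr : 0 ≤ r)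
    (hFr : F ⊆ closedBall x₀ r) :
    μHE[m].real F ≤ unitDiscVolume n * r ^ m := by
  rw [measureReal_def, euclideanHausdorffMeasure_eq_volume_preimage hE hn hF hFn,
    ← measureReal_def, ← volume_real_closedBall_orthogonal hE hn hr]
  refine measureReal_mono ?_ measure_closedBall_lt_top.ne
  rw [← preimage_const_add_orthogonal_closedBall n x₀ r]
  exact fun y hy => hFr hy

lemma euclideanHausdorffMeasure_real_disc (hE : Module.finrank ℝ E = m + 1) (hn : ‖n‖ = 1)
    (x₀ : E) (hr : 0 ≤ r) :
    μHE[m].real (disc n x₀ r) = unitDiscVolume n * r ^ m := by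
  rw [measureReal_def, euclideanHausdorffMeasure_eq_volume_preimage hE hn
    (isClosed_disc n x₀ r).measurableSet fun x hx => hx.1, ← measureReal_def,
    ← volume_real_closedBall_orthogonal hE hn hr, ← preimage_const_add_orthogonal_closedBall n x₀]
  congr 1
  ext y
  have hy : ⟪n, (y : E)⟫ = 0 := Submodule.mem_orthogonal_singleton_iff_inner_right.1 y.2
  simp [disc, hy]

lemma volume_real_slab_le (hE : Module.finrank ℝ E = m + 1) (hn : ‖n‖ = 1) (x₀ : E) (hr : 0 ≤ r)
    {δ : ℝ} (hδ : 0 ≤ δ) :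
    volume.real (slab n x₀ r δ) ≤ 2 * δ * (unitDiscVolume n * r ^ m) := by
  have hsub : (fun p : (ℝ ∙ n)ᗮ × ℝ => x₀ + ((p.1 : E) + p.2 • n)) ⁻¹' slab n x₀ r δ
      ⊆ closedBall 0 r ×ˢ Icc (-δ) δ := by
    rintro ⟨y, t⟩ ⟨ht, hball⟩
    rw [mem_closedBall, dist_eq_norm, add_sub_cancel_left] at hball
    rw [mem_ofPred_eq, add_sub_cancel_left, inner_orthogonal_add_smul hn] at ht
    exact ⟨mem_closedBall_zero_iff.2 ((norm_le_norm_orthogonal_add_smul y t).trans hball),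
      abs_le.1 ht⟩
  rw [← (measurePreserving_orthogonal_add_smul hn x₀).measureReal_preimage
    (isClosed_slab n x₀ r δ).measurableSet.nullMeasurableSet]
  refine (measureReal_mono hsub ?_).trans_eq ?_
  · exact ((isCompact_closedBall _ _).prod isCompact_Icc).measure_lt_top.ne
  · rw [Measure.volume_eq_prod, measureReal_prod_prod, volume_real_closedBall_orthogonal hE hn hr,
      Real.volume_real_Icc_of_le (by linarith)]
    ring

end DiscVolume

section TraceInequality

section

variable {E : Type*} [NormedAddCommGroup E] [NormedSpace ℝ E] {n : E}

lemma exists_first_exit {ω : Set E} (hω : IsOpen ω) {x : E} {h : ℝ} (hh : 0 ≤ h) (hx : x ∈ ω)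
    (hxh : x + h • n ∉ ω) :
    ∃ b, 0 < b ∧ b ≤ h ∧ x + b • n ∉ ω ∧ ∀ t ∈ Ico 0 b, x + t • n ∈ ω := by
  have hclosed : IsClosed {t : ℝ | x + t • n ∉ ω} :=
    hω.isClosed_compl.preimage (f := fun t : ℝ => x + t • n) (by fun_prop)
  obtain ⟨b, ⟨⟨hb0, hbh⟩, hbω⟩, hleast⟩ :=
    (isCompact_Icc (a := (0 : ℝ)) (b := h)).inter_right hclosed |>.exists_isLeast
      ⟨h, ⟨hh, le_rfl⟩, hxh⟩
  refine ⟨b, hb0.lt_of_ne ?_, hbh, hbω, fun t ht => ?_⟩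
  · rintro rfl
    exact hbω (by simpa using hx)
  · by_contra htω
    exact ht.2.not_ge (hleast ⟨⟨ht.1, ht.2.le.trans hbh⟩, htω⟩)

lemma lipschitzWith_comp_line {φ : E → ℝ} {K : ℝ≥0} (hφ : LipschitzWith K φ) (hn : ‖n‖ = 1)
    (x : E) : LipschitzWith K (fun t : ℝ => φ (x + t • n)) := by
  have hline : LipschitzWith 1 (fun t : ℝ => x + t • n) := .of_dist_le_mul fun s t => by
    rw [dist_add_left, dist_eq_norm, ← sub_smul, norm_smul, hn, mul_one, NNReal.coe_one, one_mul,
      Real.dist_eq, Real.norm_eq_abs]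
  exact mul_one K ▸ hφ.comp hline

end

variable {E : Type*} [NormedAddCommGroup E] [InnerProductSpace ℝ E] [CompleteSpace E]
  {φ : E → ℝ} {K : ℝ≥0} {ω : Set E} {x n : E} {κ h : ℝ}

lemma deriv_line_sq_le_norm_gradient_sq (hn : ‖n‖ = 1) {t : ℝ}
    (hφ : DifferentiableAt ℝ φ (x + t • n)) :
    deriv (fun s : ℝ => φ (x + s • n)) t ^ 2 ≤ ‖gradient φ (x + t • n)‖ ^ 2 := by
  have hline : HasDerivAt (fun s : ℝ => x + s • n) n t := by
    simpa using ((hasDerivAt_id t).smul_const n).const_add x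
  have hderiv : deriv (fun s : ℝ => φ (x + s • n)) t = fderiv ℝ φ (x + t • n) n :=
    (hφ.hasFDerivAt.comp_hasDerivAt t hline).deriv
  rw [hderiv, norm_gradient_eq_norm_fderiv, sq_le_sq, abs_norm]
  simpa [hn] using (fderiv ℝ φ (x + t • n)).le_opNorm n

lemma energyDensity_line_le (hn : ‖n‖ = 1) (κ : ℝ) {t : ℝ}
    (hφ : DifferentiableAt ℝ φ (x + t • n)) :
    deriv (fun s : ℝ => φ (x + s • n)) t ^ 2 + κ ^ 2 * φ (x + t • n) ^ 2
      ≤ energyDensity κ φ (x + t • n) :=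
  add_le_add_left (deriv_line_sq_le_norm_gradient_sq hn hφ) _

lemma sq_le_min_mul_integral_segment (hφ : LipschitzWith K φ) (hn : ‖n‖ = 1) (hκ : 0 < κ)
    (hh : 0 < h) (hxh : φ (x + h • n) = 0)
    (hdiff : ∀ᵐ t : ℝ, DifferentiableAt ℝ φ (x + t • n))
    (hint : IntegrableOn (fun t : ℝ => energyDensity κ φ (x + t • n)) (Ioc 0 h)) :
    φ x ^ 2 ≤ min h κ⁻¹ * ∫ t in Ioc 0 h, energyDensity κ φ (x + t • n) := by
  set f : ℝ → ℝ := fun t => φ (x + t • n) with hfdef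
  have hf : LipschitzWith K f := lipschitzWith_comp_line hφ hn x
  have hf' := intervalIntegrable_deriv_sq_of_lipschitzWith hf 0 h
  have hf2 : IntervalIntegrable (fun t => κ ^ 2 * f t ^ 2) volume 0 h :=
    (continuous_const.mul (hf.continuous.pow 2)).intervalIntegrable _ _
  have hfibre : ∫ t in 0..h, (deriv f t ^ 2 + κ ^ 2 * f t ^ 2)
      ≤ ∫ t in Ioc 0 h, energyDensity κ φ (x + t • n) := by
    rw [intervalIntegral.integral_of_le hh.le]
    refine setIntegral_mono_ae ((hf'.add hf2).1) hint ?_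
    filter_upwards [hdiff] with t ht using energyDensity_line_le hn κ ht
  calc φ x ^ 2 = f 0 ^ 2 := by simp [hfdef]
    _ ≤ min (h - 0) κ⁻¹ * ∫ t in 0..h, (deriv f t ^ 2 + κ ^ 2 * f t ^ 2) :=
        sq_le_min_mul_integral_deriv_sq_add hh hf.lipschitzOnWith.absolutelyContinuousOnInterval
          hf' hxh hκ
    _ ≤ min h κ⁻¹ * ∫ t in Ioc 0 h, energyDensity κ φ (x + t • n) := by
        rw [sub_zero]
        gcongr

lemma sq_le_min_mul_integral_line (hφ : LipschitzWith K φ) (hω : IsOpen ω)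
    (hφ0 : ∀ y ∉ ω, φ y = 0) (hn : ‖n‖ = 1) (hκ : 0 < κ) (hh : 0 ≤ h) (hxh : x + h • n ∉ ω)
    (hdiff : ∀ᵐ t : ℝ, DifferentiableAt ℝ φ (x + t • n))
    (hint : Integrable fun t : ℝ => ω.indicator (energyDensity κ φ) (x + t • n)) :
    φ x ^ 2 ≤ min h κ⁻¹ * ∫ t : ℝ, ω.indicator (energyDensity κ φ) (x + t • n) := by
  have hnonneg : ∀ y, 0 ≤ ω.indicator (energyDensity κ φ) y :=
    indicator_nonneg fun y _ => energyDensity_nonneg κ φ y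
  by_cases hx : x ∈ ω
  swap
  · rw [hφ0 x hx, zero_pow two_ne_zero]
    exact mul_nonneg (le_min hh (inv_nonneg.2 hκ.le)) (integral_nonneg fun t => hnonneg _)
  obtain ⟨b, hb0, hbh, hbω, hinside⟩ := exists_first_exit hω hh hx hxh
  have hdensity : (fun t : ℝ => ω.indicator (energyDensity κ φ) (x + t • n))
      =ᵐ[volume.restrict (Ioc 0 b)] fun t => energyDensity κ φ (x + t • n) := by
    rw [← restrict_Ioo_eq_restrict_Ioc]
    exact (ae_restrict_mem measurableSet_Ioo).mono fun t ht =>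
      indicator_of_mem (hinside t (Ioo_subset_Ico_self ht)) _
  calc φ x ^ 2 ≤ min b κ⁻¹ * ∫ t in Ioc 0 b, energyDensity κ φ (x + t • n) :=
        sq_le_min_mul_integral_segment hφ hn hκ hb0 (hφ0 _ hbω) hdiff
          (hint.integrableOn.congr hdensity)
    _ = min b κ⁻¹ * ∫ t in Ioc 0 b, ω.indicator (energyDensity κ φ) (x + t • n) := by
        rw [integral_congr_ae hdensity]
    _ ≤ min h κ⁻¹ * ∫ t : ℝ, ω.indicator (energyDensity κ φ) (x + t • n) := by
        gcongr
        · exact integral_nonneg fun t => hnonneg _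
        · exact .of_forall fun t => hnonneg _
        · exact Measure.restrict_le_self

lemma setIntegral_sq_le_min_mul_energySq {m : ℕ} {φ : Euc (m + 1) → ℝ} {ω F : Set (Euc (m + 1))}
    {x₀ n : Euc (m + 1)} (hφ : IsTest ω φ) (hω : IsOpen ω) (hωb : Bornology.IsBounded ω)
    (hF : MeasurableSet F) (hn : ‖n‖ = 1) (hFn : ∀ x ∈ F, ⟪n, x - x₀⟫ = 0) (hκ : 0 < κ)
    (hh : 0 ≤ h) (hFh : ∀ x ∈ F, x + h • n ∉ ω) :
    ∫ x in F, φ x ^ 2 ∂μHE[m] ≤ min h κ⁻¹ * energySq κ ω φ := by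
  obtain ⟨⟨K, hK⟩, hφ0⟩ := hφ
  set G := ω.indicator (energyDensity κ φ)
  have hnonneg : ∀ y, 0 ≤ G y := indicator_nonneg fun y _ => energyDensity_nonneg κ φ y
  have hP := measurePreserving_orthogonal_add_smul hn x₀
  have hPemb := measurableEmbedding_orthogonal_add_smul hn x₀
  have hGint : Integrable G :=
    (integrableOn_energyDensity hK hωb κ).integrable_indicator hω.measurableSet
  have hGP : Integrable (fun p : (ℝ ∙ n)ᗮ × ℝ => G (x₀ + (p.1 + p.2 • n)))
      (volume.prod volume) := (hP.integrable_comp_emb hPemb).2 hGint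
  have fubini : energySq κ ω φ = ∫ y : (ℝ ∙ n)ᗮ, ∫ t : ℝ, G (x₀ + (y + t • n)) := by
    rw [energySq_eq_setIntegral hK hωb, ← integral_indicator hω.measurableSet,
      ← hP.integral_comp hPemb, Measure.volume_eq_prod, integral_prod _ hGP]
  have hdiff := Measure.ae_ae_of_ae_prod (hP.quasiMeasurePreserving.ae hK.ae_differentiableAt)
  have hSmeas : MeasurableSet {y : (ℝ ∙ n)ᗮ | x₀ + (y : Euc (m + 1)) ∈ F} :=
    (isometry_const_add_orthogonal n x₀).continuous.measurable hF
  rw [setIntegral_euclideanHausdorffMeasure finrank_euclideanSpace_fin hn hF hFn, fubini,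
    ← integral_const_mul, ← integral_indicator hSmeas]
  refine integral_mono_of_nonneg (.of_forall (indicator_nonneg fun y _ => sq_nonneg _))
    (hGP.integral_prod_left.const_mul _) ?_
  filter_upwards [hdiff, hGP.prod_right_ae] with y hy hyint
  rw [indicator_apply]
  split_ifs with hyF
  · simp only [← add_assoc] at hy hyint ⊢
    exact sq_le_min_mul_integral_line hK hω hφ0 hn hκ hh (hFh _ hyF) hy hyint
  · exact mul_nonneg (le_min hh (inv_nonneg.2 hκ.le)) (integral_nonneg fun t => hnonneg _)

end TraceInequality

section UpperBound

lemma memLp_two_restrict_of_continuousOn {X : Type*} [TopologicalSpace X] [T2Space X]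
    [MeasurableSpace X] [BorelSpace X] {ν : Measure X} {F : Set X} {f : X → ℝ}
    (hF : IsCompact F) (hν : ν F ≠ ∞) (hf : ContinuousOn f F) : MemLp f 2 (ν.restrict F) := by
  refine (memLp_two_iff_integrable_sq
    (hf.aestronglyMeasurable_of_isCompact hF hF.measurableSet)).2 ?_
  exact (hf.pow 2).integrableOn_of_subset_isCompact hF hF.measurableSet subset_rfl hν

theorem dualNorm_setIntegral_mul_le {m : ℕ} {ω F : Set (Euc (m + 1))} {x₀ n : Euc (m + 1)}
    {κ h : ℝ} {j : Euc (m + 1) → ℝ} (hω : IsOpen ω) (hωb : Bornology.IsBounded ω)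
    (hF : IsCompact F) (hn : ‖n‖ = 1) (hFn : ∀ x ∈ F, ⟪n, x - x₀⟫ = 0) (hκ : 0 < κ) (hh : 0 ≤ h)
    (hFh : ∀ x ∈ F, x + h • n ∉ ω) (hj : ContinuousOn j F) :
    dualNorm κ ω (fun φ => ∫ x in F, j x * φ x ∂μHE[m])
      ≤ ENNReal.ofReal (√(min h κ⁻¹) * √(∫ x in F, j x ^ 2 ∂μHE[m])) := by
  have hmin : 0 ≤ min h κ⁻¹ := le_min hh (inv_nonneg.2 hκ.le)
  have hFfin : μHE[m] F ≠ ∞ := (euclideanHausdorffMeasure_lt_top finrank_euclideanSpace_fin hn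
    hF.measurableSet hFn hF.isBounded).ne
  refine dualNorm_le_ofReal (by positivity) fun φ hφ => ?_
  obtain ⟨K, hK⟩ := hφ.1
  calc ∫ x in F, j x * φ x ∂μHE[m]
      ≤ √(∫ x in F, j x ^ 2 ∂μHE[m]) * √(∫ x in F, φ x ^ 2 ∂μHE[m]) :=
        integral_mul_le_sqrt_mul_sqrt (memLp_two_restrict_of_continuousOn hF hFfin hj)
          (memLp_two_restrict_of_continuousOn hF hFfin hK.continuous.continuousOn)
    _ ≤ √(∫ x in F, j x ^ 2 ∂μHE[m]) * √(min h κ⁻¹ * energySq κ ω φ) := by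
        gcongr
        exact setIntegral_sq_le_min_mul_energySq hφ hω hωb hF.measurableSet hn hFn hκ hh hFh
    _ = √(min h κ⁻¹) * √(∫ x in F, j x ^ 2 ∂μHE[m]) * √(energySq κ ω φ) := by
        rw [Real.sqrt_mul hmin]
        ring

end UpperBound

section Tent

variable {E : Type*} [NormedAddCommGroup E] [InnerProductSpace ℝ E] {n x₀ x : E} {ρ δ : ℝ}

/-- A tent of height one centred at `x₀`, of width `ρ` and squeezed to thickness `δ` in the
direction of `n`; it plays the role of the squeezed face bubble. -/
def tent (n x₀ : E) (ρ δ : ℝ) (x : E) : ℝ := max 0 (1 - ‖x - x₀‖ / ρ - |⟪n, x - x₀⟫| / δ)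

lemma tent_nonneg (n x₀ : E) (ρ δ : ℝ) (x : E) : 0 ≤ tent n x₀ ρ δ x := le_max_left _ _

lemma tent_le_one (hρ : 0 ≤ ρ) (hδ : 0 ≤ δ) : tent n x₀ ρ δ x ≤ 1 := by
  have h₁ : 0 ≤ ‖x - x₀‖ / ρ := by positivity
  have h₂ : 0 ≤ |⟪n, x - x₀⟫| / δ := by positivity
  exact max_le zero_le_one (by linarith)

lemma tent_eq_zero_of_notMem_ball (hρ : 0 < ρ) (hδ : 0 ≤ δ) (hx : x ∉ ball x₀ ρ) :
    tent n x₀ ρ δ x = 0 := by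
  have h₁ : 1 ≤ ‖x - x₀‖ / ρ := by
    rw [one_le_div hρ, ← dist_eq_norm]
    simpa using hx
  have h₂ : 0 ≤ |⟪n, x - x₀⟫| / δ := by positivity
  exact max_eq_left (by linarith)

lemma tent_eq_zero_of_notMem_slab (hρ : 0 < ρ) (hδ : 0 < δ) (hx : x ∉ slab n x₀ ρ δ) :
    tent n x₀ ρ δ x = 0 := by
  by_cases hxδ : |⟪n, x - x₀⟫| ≤ δ
  · exact tent_eq_zero_of_notMem_ball hρ hδ.le fun hxρ => hx ⟨hxδ, ball_subset_closedBall hxρ⟩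
  · have h₁ : 1 ≤ |⟪n, x - x₀⟫| / δ := (one_le_div hδ).2 (not_le.1 hxδ).le
    have h₂ : 0 ≤ ‖x - x₀‖ / ρ := by positivity
    exact max_eq_left (by linarith)

lemma half_le_tent_of_mem_disc (hρ : 0 < ρ) (hx : x ∈ disc n x₀ (ρ / 2)) :
    1 / 2 ≤ tent n x₀ ρ δ x := by
  obtain ⟨hxn, hxρ⟩ := hx
  rw [mem_closedBall, dist_eq_norm] at hxρ
  have h₁ : ‖x - x₀‖ / ρ ≤ 1 / 2 := by
    rw [div_le_iff₀ hρ]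
    linarith
  refine le_max_of_le_right ?_
  rw [show ⟪n, x - x₀⟫ = 0 from hxn, abs_zero, zero_div]
  linarith

lemma lipschitzWith_tent (hn : ‖n‖ = 1) (hδ : 0 < δ) (hδρ : δ ≤ ρ) :
    LipschitzWith (Real.toNNReal (2 / δ)) (tent n x₀ ρ δ) := by
  have hslope : LipschitzWith (Real.toNNReal (2 / δ))
      fun x => 1 - ‖x - x₀‖ / ρ - |⟪n, x - x₀⟫| / δ := by
    refine .of_le_add_mul _ fun x y => ?_
    rw [Real.coe_toNNReal _ (by positivity), dist_comm, dist_eq_norm]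
    have hnorm : ‖y - x₀‖ / ρ ≤ ‖x - x₀‖ / ρ + ‖y - x‖ / δ :=
      calc ‖y - x₀‖ / ρ ≤ (‖y - x‖ + ‖x - x₀‖) / ρ := by
            gcongr
            exacts [hδ.le.trans hδρ, norm_sub_le_norm_sub_add_norm_sub y x x₀]
        _ ≤ ‖x - x₀‖ / ρ + ‖y - x‖ / δ := by
            rw [add_div, add_comm]
            gcongr
    have hinner : |⟪n, y - x₀⟫| / δ ≤ |⟪n, x - x₀⟫| / δ + ‖y - x‖ / δ := by
      rw [← add_div, ← sub_add_sub_cancel' x x₀ y, inner_add_right]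
      gcongr
      refine (abs_add_le _ _).trans (add_le_add_right ?_ _)
      simpa [hn] using abs_real_inner_le_norm n (y - x)
    linarith [show 2 / δ * ‖y - x‖ = ‖y - x‖ / δ + ‖y - x‖ / δ by ring]
  exact hslope.const_max 0

lemma isTest_tent {d : ℕ} {ω : Set (Euc d)} {n x₀ : Euc d} (hn : ‖n‖ = 1) (hδ : 0 < δ)
    (hδρ : δ ≤ ρ) (hω : ball x₀ ρ ⊆ ω) : IsTest ω (tent n x₀ ρ δ) :=
  ⟨⟨_, lipschitzWith_tent hn hδ hδρ⟩, fun _ hx =>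
    tent_eq_zero_of_notMem_ball (hδ.trans_le hδρ) hδ.le fun hxball => hx (hω hxball)⟩

lemma gradient_eq_zero_of_notMem_isClosed {E : Type*} [NormedAddCommGroup E]
    [InnerProductSpace ℝ E] [CompleteSpace E] {φ : E → ℝ} {S : Set E} (hS : IsClosed S)
    (hφ : ∀ x ∉ S, φ x = 0) {x : E} (hx : x ∉ S) : gradient φ x = 0 := by
  have hev : φ =ᶠ[nhds x] fun _ => 0 :=
    Filter.eventually_of_mem (hS.isOpen_compl.mem_nhds hx) hφ
  rw [hev.gradient_eq, gradient_fun_const]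

lemma energySq_le_of_eq_zero_off {d : ℕ} {φ : Euc d → ℝ} {K : ℝ≥0} {M : ℝ} {S ω : Set (Euc d)}
    (hφ : LipschitzWith K φ) (hφM : ∀ x, |φ x| ≤ M) (hS : IsClosed S)
    (hSb : Bornology.IsBounded S) (hφS : ∀ x ∉ S, φ x = 0) (hω : Bornology.IsBounded ω) (κ : ℝ) :
    energySq κ ω φ ≤ (K ^ 2 + κ ^ 2 * M ^ 2) * volume.real S := by
  have hdensity : energyDensity κ φ ≤ S.indicator fun _ => (K : ℝ) ^ 2 + κ ^ 2 * M ^ 2 := by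
    intro x
    by_cases hx : x ∈ S
    · rw [indicator_of_mem hx, energyDensity, norm_gradient_eq_norm_fderiv, ← sq_abs (φ x)]
      gcongr
      exacts [norm_fderiv_le_of_lipschitz ℝ hφ, hφM x]
    · rw [indicator_of_notMem hx, energyDensity, hφS x hx,
        gradient_eq_zero_of_notMem_isClosed hS hφS hx]
      simp
  have hSint : Integrable (S.indicator fun _ => (K : ℝ) ^ 2 + κ ^ 2 * M ^ 2) :=
    (integrableOn_const hSb.measure_lt_top.ne).integrable_indicator hS.measurableSet
  have hnonneg : 0 ≤ energyDensity κ φ := energyDensity_nonneg κ φ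
  calc energySq κ ω φ = ∫ x in ω, energyDensity κ φ x := energySq_eq_setIntegral hφ hω κ
    _ ≤ ∫ x in ω, S.indicator (fun _ => (K : ℝ) ^ 2 + κ ^ 2 * M ^ 2) x :=
        integral_mono_of_nonneg (.of_forall hnonneg) hSint.integrableOn (.of_forall hdensity)
    _ ≤ ∫ x, S.indicator (fun _ => (K : ℝ) ^ 2 + κ ^ 2 * M ^ 2) x :=
        setIntegral_le_integral hSint (.of_forall fun x => (hnonneg x).trans (hdensity x))
    _ = (K ^ 2 + κ ^ 2 * M ^ 2) * volume.real S := by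
        rw [integral_indicator hS.measurableSet, setIntegral_const, smul_eq_mul, mul_comm]

lemma energySq_tent_le {m : ℕ} {n x₀ : Euc (m + 1)} {ω : Set (Euc (m + 1))} {κ : ℝ}
    (hn : ‖n‖ = 1) (hδ : 0 < δ) (hδρ : δ ≤ ρ) (hκ : 0 < κ) (hδκ : δ ≤ κ⁻¹)
    (hω : Bornology.IsBounded ω) :
    energySq κ ω (tent n x₀ ρ δ) ≤ 10 * (unitDiscVolume n * ρ ^ m) / δ := by
  have hρ : 0 < ρ := hδ.trans_le hδρ
  have hκδ : κ ≤ δ⁻¹ := (le_inv_comm₀ hκ hδ).2 hδκ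
  have hbound : ∀ x, |tent n x₀ ρ δ x| ≤ 1 := fun x => by
    rw [abs_of_nonneg (tent_nonneg _ _ _ _ _)]
    exact tent_le_one hρ.le hδ.le
  calc energySq κ ω (tent n x₀ ρ δ)
      ≤ ((2 / δ).toNNReal ^ 2 + κ ^ 2 * 1 ^ 2) * volume.real (slab n x₀ ρ δ) :=
        energySq_le_of_eq_zero_off (lipschitzWith_tent hn hδ hδρ) hbound (isClosed_slab _ _ _ _)
          (isBounded_closedBall.subset inter_subset_right)
          (fun x => tent_eq_zero_of_notMem_slab hρ hδ) hω κ
    _ ≤ ((2 / δ) ^ 2 + δ⁻¹ ^ 2 * 1 ^ 2) * (2 * δ * (unitDiscVolume n * ρ ^ m)) := by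
        rw [Real.coe_toNNReal _ (by positivity)]
        gcongr
        exact volume_real_slab_le finrank_euclideanSpace_fin hn x₀ hρ.le hδ.le
    _ = 10 * (unitDiscVolume n * ρ ^ m) / δ := by
        field_simp
        ring

end Tent

section FacePatch

variable {E : Type*} [NormedAddCommGroup E] [InnerProductSpace ℝ E] {T₁ T₂ : Set E}
  {x₀ v n : E} {r t D : ℝ}

/-- Two convex bodies `T₁`, `T₂` meeting in a flat face `T₁ ∩ T₂` with unit normal `n`, such that
the ball of radius `r` about the point `x₀` of the face is covered by `T₁ ∪ T₂` and meets the
hyperplane of the face only inside the face. The inclusions are required of the open ball. -/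
structure IsFacePatch (T₁ T₂ : Set E) (x₀ n : E) (r : ℝ) : Prop where
  convex_left : Convex ℝ T₁
  convex_right : Convex ℝ T₂
  isCompact_left : IsCompact T₁
  isCompact_right : IsCompact T₂
  norm_normal : ‖n‖ = 1
  inner_eq_zero : ∀ x ∈ T₁ ∩ T₂, ⟪n, x - x₀⟫ = 0
  mem_face : ∀ x ∈ ball x₀ r, ⟪n, x - x₀⟫ = 0 → x ∈ T₁ ∩ T₂
  ball_subset : ball x₀ r ⊆ T₁ ∪ T₂

lemma lineMap_sub_lineMap (v x y : E) (t : ℝ) :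
    AffineMap.lineMap v y t - AffineMap.lineMap v x t = t • (y - x) := by
  simp only [AffineMap.lineMap_apply, vsub_eq_sub, vadd_eq_add, smul_sub]
  abel

lemma exists_mem_ball_lineMap_eq {x : E} (ht : 0 < t)
    (hx : x ∈ ball (AffineMap.lineMap v x₀ t) (t * r)) :
    ∃ y ∈ ball x₀ r, AffineMap.lineMap v y t = x := by
  have hxy : AffineMap.lineMap v (AffineMap.lineMap v x t⁻¹) t = x := by
    rw [AffineMap.lineMap_lineMap_right, mul_inv_cancel₀ ht.ne', AffineMap.lineMap_apply_one]
  refine ⟨AffineMap.lineMap v x t⁻¹, ?_, hxy⟩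
  rw [← hxy, mem_ball, dist_eq_norm, lineMap_sub_lineMap, norm_smul,
    Real.norm_of_nonneg ht.le] at hx
  rw [mem_ball, dist_eq_norm]
  exact lt_of_mul_lt_mul_left hx ht.le

namespace IsFacePatch

lemma isCompact_face (h : IsFacePatch T₁ T₂ x₀ n r) : IsCompact (T₁ ∩ T₂) :=
  h.isCompact_left.inter h.isCompact_right

lemma center_mem (h : IsFacePatch T₁ T₂ x₀ n r) (hr : 0 < r) : x₀ ∈ T₁ ∩ T₂ :=
  h.mem_face x₀ (mem_ball_self hr) (by simp)

lemma ball_subset_interior (h : IsFacePatch T₁ T₂ x₀ n r) : ball x₀ r ⊆ interior (T₁ ∪ T₂) :=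
  interior_maximal h.ball_subset isOpen_ball

lemma subset_closedBall_left (h : IsFacePatch T₁ T₂ x₀ n r) (hdiam : diam T₁ ≤ D)
    {x : E} (hx : x ∈ T₁ ∩ T₂) : T₁ ⊆ closedBall x D := fun _ hy =>
  (dist_le_diam_of_mem h.isCompact_left.isBounded hy hx.1).trans hdiam

lemma subset_closedBall_right (h : IsFacePatch T₁ T₂ x₀ n r) (hdiam : diam T₂ ≤ D)
    {x : E} (hx : x ∈ T₁ ∩ T₂) : T₂ ⊆ closedBall x D := fun _ hy =>
  (dist_le_diam_of_mem h.isCompact_right.isBounded hy hx.2).trans hdiam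

lemma isBounded_interior_union (h : IsFacePatch T₁ T₂ x₀ n r) :
    Bornology.IsBounded (interior (T₁ ∪ T₂)) :=
  (h.isCompact_left.union h.isCompact_right).isBounded.subset interior_subset

lemma disc_subset_face (h : IsFacePatch T₁ T₂ x₀ n r) {ρ : ℝ} (hρ : ρ < r) :
    disc n x₀ ρ ⊆ T₁ ∩ T₂ := fun x hx =>
  h.mem_face x (closedBall_subset_ball hρ hx.2) hx.1

lemma lineMap_mem_face (h : IsFacePatch T₁ T₂ x₀ n r) (ht : 0 < t) {x : E}
    (hx : x ∈ ball (AffineMap.lineMap v x₀ t) (t * r))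
    (hxn : ⟪n, x - AffineMap.lineMap v x₀ t⟫ = 0) :
    ∃ y ∈ T₁ ∩ T₂, AffineMap.lineMap v y t = x := by
  obtain ⟨y, hy, rfl⟩ := exists_mem_ball_lineMap_eq ht hx
  refine ⟨y, h.mem_face y hy ?_, rfl⟩
  rw [lineMap_sub_lineMap, inner_smul_right] at hxn
  exact (mul_eq_zero.1 hxn).resolve_left ht.ne'

lemma lineMap (h : IsFacePatch T₁ T₂ x₀ n r) (hr : 0 < r) (hv : v ∈ T₁ ∩ T₂)
    (ht : t ∈ Ioc (0 : ℝ) 1) :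
    IsFacePatch T₁ T₂ (AffineMap.lineMap v x₀ t) n (t * r) where
  __ := h
  inner_eq_zero x hx := by
    have hcx := h.inner_eq_zero _ ((h.convex_left.inter h.convex_right).lineMap_mem hv
      (h.center_mem hr) (Ioc_subset_Icc_self ht))
    rw [← sub_sub_sub_cancel_right _ _ x₀, inner_sub_right, h.inner_eq_zero x hx, hcx, sub_zero]
  mem_face x hx hxn := by
    obtain ⟨y, hy, rfl⟩ := h.lineMap_mem_face ht.1 hx hxn
    exact (h.convex_left.inter h.convex_right).lineMap_mem hv hy (Ioc_subset_Icc_self ht)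
  ball_subset x hx := by
    obtain ⟨y, hy, rfl⟩ := exists_mem_ball_lineMap_eq ht.1 hx
    exact (h.ball_subset hy).imp
      (fun hyT => h.convex_left.lineMap_mem hv.1 hyT (Ioc_subset_Icc_self ht))
      (fun hyT => h.convex_right.lineMap_mem hv.2 hyT (Ioc_subset_Icc_self ht))

lemma exists_half_max [FiniteDimensional ℝ E] (h : IsFacePatch T₁ T₂ x₀ n r) (hr : 0 < r)
    (j : E →ᵃ[ℝ] ℝ) :
    ∃ x₁ : E, ∃ σ M : ℝ, |σ| = 1 ∧ 0 ≤ M ∧ (∀ x ∈ T₁ ∩ T₂, |j x| ≤ M) ∧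
      IsFacePatch T₁ T₂ x₁ n (r / 4) ∧
        ∀ x ∈ ball x₁ (r / 4), ⟪n, x - x₁⟫ = 0 → M / 2 ≤ σ * j x := by
  obtain ⟨v, hv, hmax⟩ := h.isCompact_face.exists_isMaxOn ⟨x₀, h.center_mem hr⟩
    j.continuous_of_finiteDimensional.abs.continuousOn
  obtain ⟨σ, hσ, hσv⟩ : ∃ σ : ℝ, |σ| = 1 ∧ σ * j v = |j v| := by
    rcases abs_cases (j v) with hj | hj
    · exact ⟨1, by simp, by rw [hj.1, one_mul]⟩
    · exact ⟨-1, by simp, by rw [hj.1, neg_one_mul]⟩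
  -- Three quarters of the way from the centre to the maximum point `v`, convexity leaves at least
  -- `¾ M - ¼ M` of the maximum `M = |j v|`.
  have hr4 : r / 4 = 1 / 4 * r := by ring
  refine ⟨AffineMap.lineMap v x₀ (1 / 4 : ℝ), σ, |j v|, hσ, abs_nonneg _, fun x hx => hmax hx,
    hr4 ▸ h.lineMap hr hv (by norm_num), fun x hx hxn => ?_⟩
  rw [hr4] at hx
  obtain ⟨y, hy, rfl⟩ := h.lineMap_mem_face (by norm_num) hx hxn
  have hσy : -|j v| ≤ σ * j y :=
    (abs_le.1 ((abs_mul σ (j y)).trans_le (by rw [hσ, one_mul]; exact hmax hy))).1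
  have hcombination :
      σ * j (AffineMap.lineMap v y (1 / 4 : ℝ)) = 3 / 4 * |j v| + 1 / 4 * (σ * j y) := by
    rw [AffineMap.apply_lineMap, AffineMap.lineMap_apply_ring, ← hσv]
    ring
  rw [hcombination]
  linarith

end IsFacePatch

end FacePatch

section FaceResidual

variable {m : ℕ} {T₁ T₂ : Set (Euc (m + 1))} {x₀ n : Euc (m + 1)} {r κ h : ℝ}

lemma add_smul_notMem_interior {E : Type*} [NormedAddCommGroup E] [NormedSpace ℝ E] {S : Set E}
    {x n : E} {h : ℝ} (hh : 0 < h) (hS : S ⊆ closedBall x h) (hn : ‖n‖ = 1) :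
    x + h • n ∉ interior S := by
  intro hx
  have hball := interior_mono hS hx
  rw [interior_closedBall x hh.ne', mem_ball, dist_self_add_left, norm_smul, hn, mul_one,
    Real.norm_of_nonneg hh.le] at hball
  exact hball.false

namespace IsFacePatch

lemma measure_face_lt_top (hP : IsFacePatch T₁ T₂ x₀ n r) : μHE[m] (T₁ ∩ T₂) < ∞ :=
  euclideanHausdorffMeasure_lt_top finrank_euclideanSpace_fin hP.norm_normal
    hP.isCompact_face.measurableSet hP.inner_eq_zero hP.isCompact_face.isBounded

theorem dualNorm_le (hP : IsFacePatch T₁ T₂ x₀ n r) (hκ : 0 < κ) (hh : 0 < h)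
    (hdiam₁ : diam T₁ ≤ h) (hdiam₂ : diam T₂ ≤ h) {j : Euc (m + 1) → ℝ} (hj : Continuous j) :
    dualNorm κ (interior (T₁ ∪ T₂)) (fun φ => ∫ x in T₁ ∩ T₂, j x * φ x ∂μHE[m])
      ≤ ENNReal.ofReal (√(min h κ⁻¹) * √(∫ x in T₁ ∩ T₂, j x ^ 2 ∂μHE[m])) :=
  dualNorm_setIntegral_mul_le isOpen_interior hP.isBounded_interior_union
    hP.isCompact_face hP.norm_normal hP.inner_eq_zero hκ hh.le
    (fun _ hx => add_smul_notMem_interior hh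
      (union_subset (hP.subset_closedBall_left hdiam₁ hx) (hP.subset_closedBall_right hdiam₂ hx))
      hP.norm_normal)
    hj.continuousOn

lemma le_setIntegral_mul_tent (hP : IsFacePatch T₁ T₂ x₀ n r) (hr : 0 < r) {δ M : ℝ}
    (hδ : 0 < δ) (hδr : δ ≤ r) (hM : 0 ≤ M) {g : Euc (m + 1) → ℝ} (hg : Continuous g)
    (hMg : ∀ x ∈ ball x₀ r, ⟪n, x - x₀⟫ = 0 → M / 2 ≤ g x) :
    M / 4 * (unitDiscVolume n * (r / 2) ^ m)
      ≤ ∫ x in T₁ ∩ T₂, g x * tent n x₀ r δ x ∂μHE[m] := by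
  have hdisc : disc n x₀ (r / 2) ⊆ T₁ ∩ T₂ := hP.disc_subset_face (by linarith)
  have hcont : Continuous fun x => g x * tent n x₀ r δ x :=
    hg.mul (lipschitzWith_tent hP.norm_normal hδ hδr).continuous
  have hint : IntegrableOn (fun x => g x * tent n x₀ r δ x) (T₁ ∩ T₂) μHE[m] :=
    hcont.continuousOn.integrableOn_of_subset_isCompact hP.isCompact_face
      hP.isCompact_face.measurableSet subset_rfl hP.measure_face_lt_top.ne
  have hnonneg : ∀ x ∈ T₁ ∩ T₂, 0 ≤ g x * tent n x₀ r δ x := fun x hx => by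
    by_cases hxr : x ∈ ball x₀ r
    · have hgx : M / 2 ≤ g x := hMg x hxr (hP.inner_eq_zero x hx)
      exact mul_nonneg (by linarith) (tent_nonneg n x₀ r δ x)
    · rw [tent_eq_zero_of_notMem_ball hr hδ.le hxr, mul_zero]
  have hlower : ∀ x ∈ disc n x₀ (r / 2), M / 4 ≤ g x * tent n x₀ r δ x := fun x hx => by
    have hgx : M / 2 ≤ g x := hMg x (closedBall_subset_ball (by linarith) hx.2) hx.1
    have htx : 1 / 2 ≤ tent n x₀ r δ x := half_le_tent_of_mem_disc hr hx
    nlinarith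
  calc M / 4 * (unitDiscVolume n * (r / 2) ^ m)
      = M / 4 * μHE[m].real (disc n x₀ (r / 2)) := by
        rw [euclideanHausdorffMeasure_real_disc finrank_euclideanSpace_fin hP.norm_normal x₀
          (by positivity)]
    _ ≤ ∫ x in disc n x₀ (r / 2), g x * tent n x₀ r δ x ∂μHE[m] :=
        setIntegral_ge_of_const_le_real (isClosed_disc n x₀ _).measurableSet
          (measure_ne_top_of_subset hdisc hP.measure_face_lt_top.ne) hlower (hint.mono_set hdisc)
    _ ≤ ∫ x in T₁ ∩ T₂, g x * tent n x₀ r δ x ∂μHE[m] :=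
        setIntegral_mono_set hint
          (ae_restrict_of_forall_mem hP.isCompact_face.measurableSet hnonneg) hdisc.eventuallyLE

lemma setIntegral_sq_le (hP : IsFacePatch T₁ T₂ x₀ n r) (hr : 0 < r) (hh : 0 ≤ h)
    (hdiam : diam T₁ ≤ h) {M : ℝ} {j : Euc (m + 1) → ℝ} (hjM : ∀ x ∈ T₁ ∩ T₂, |j x| ≤ M) :
    ∫ x in T₁ ∩ T₂, j x ^ 2 ∂μHE[m] ≤ M ^ 2 * (unitDiscVolume n * h ^ m) := by
  have hsq : ∀ x ∈ T₁ ∩ T₂, ‖j x ^ 2‖ ≤ M ^ 2 := fun x hx => by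
    rw [norm_pow, Real.norm_eq_abs]
    gcongr
    exact hjM x hx
  calc ∫ x in T₁ ∩ T₂, j x ^ 2 ∂μHE[m]
      ≤ ‖∫ x in T₁ ∩ T₂, j x ^ 2 ∂μHE[m]‖ := Real.le_norm_self _
    _ ≤ M ^ 2 * μHE[m].real (T₁ ∩ T₂) :=
        norm_setIntegral_le_of_norm_le_const hP.measure_face_lt_top hsq
    _ ≤ M ^ 2 * (unitDiscVolume n * h ^ m) := by
        gcongr
        exact euclideanHausdorffMeasure_real_le finrank_euclideanSpace_fin hP.norm_normal
          hP.isCompact_face.measurableSet hP.inner_eq_zero hh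
          (inter_subset_left.trans (hP.subset_closedBall_left hdiam (hP.center_mem hr)))

end IsFacePatch

lemma sqrt_mul_sqrt_mul_sqrt_le_div_sqrt {a l w M δ I A : ℝ} (ha : 0 < a) (hh : 0 < h)
    (hl : 0 ≤ l) (hw : 0 < w) (hM : 0 ≤ M) (hδ : 0 < δ) (hlδ : a * l ≤ δ)
    (hI : I ≤ M ^ 2 * (w * h ^ m)) (hA : M / 4 * (w * (a * h / 2) ^ m) ≤ A) :
    √(a ^ (m + 1) / (160 * 4 ^ m)) * √l * √I ≤ A / √(10 * (w * (a * h) ^ m) / δ) := by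
  have hsquare : (M / 4 * (w * (a * h / 2) ^ m)) ^ 2 / (10 * (w * (a * h) ^ m) / δ)
      = a ^ m / (160 * 4 ^ m) * δ * (M ^ 2 * (w * h ^ m)) := by
    rw [show (4 : ℝ) ^ m = 2 ^ m * 2 ^ m by rw [← mul_pow]; norm_num, div_pow, mul_pow]
    field_simp
    ring
  refine le_trans ?_ (div_le_div_of_nonneg_right hA (Real.sqrt_nonneg _))
  rw [← Real.sqrt_mul (by positivity), ← Real.sqrt_mul (by positivity)]
  refine Real.sqrt_le_iff.2 ⟨by positivity, ?_⟩
  rw [div_pow, Real.sq_sqrt (by positivity), hsquare]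
  calc a ^ (m + 1) / (160 * 4 ^ m) * l * I
      = a ^ m / (160 * 4 ^ m) * (a * l) * I := by ring
    _ ≤ a ^ m / (160 * 4 ^ m) * δ * (M ^ 2 * (w * h ^ m)) :=
        (mul_le_mul_of_nonneg_left hI (by positivity)).trans (by gcongr)

theorem IsFacePatch.le_dualNorm {q : ℝ} (hP : IsFacePatch T₁ T₂ x₀ n (q * h)) (hq : 0 < q)
    (hq₁ : q ≤ 1) (hκ : 0 < κ) (hh : 0 < h) (hdiam : diam T₁ ≤ h) (j : Euc (m + 1) →ᵃ[ℝ] ℝ) :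
    ENNReal.ofReal (√((q / 4) ^ (m + 1) / (160 * 4 ^ m)) * √(min h κ⁻¹)
        * √(∫ x in T₁ ∩ T₂, j x ^ 2 ∂μHE[m]))
      ≤ dualNorm κ (interior (T₁ ∪ T₂)) (fun φ => ∫ x in T₁ ∩ T₂, j x * φ x ∂μHE[m]) := by
  obtain ⟨x₁, σ, M, hσ, hM, hjM, hP₁, hMj⟩ := hP.exists_half_max (by positivity) j
  set ρ : ℝ := q / 4 * h with hρ
  rw [show q * h / 4 = ρ by rw [hρ]; ring] at hP₁ hMj
  have hρ₀ : 0 < ρ := by positivity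
  set δ : ℝ := min ρ κ⁻¹
  have hδ : 0 < δ := lt_min hρ₀ (inv_pos.2 hκ)
  have hw : 0 < unitDiscVolume n := unitDiscVolume_pos n
  have hminδ : q / 4 * min h κ⁻¹ ≤ δ := by
    rw [mul_min_of_nonneg _ _ (by positivity)]
    exact min_le_min_left _ (mul_le_of_le_one_left (inv_pos.2 hκ).le (by linarith))
  have htent : M / 4 * (unitDiscVolume n * (ρ / 2) ^ m)
      ≤ |∫ x in T₁ ∩ T₂, j x * tent n x₁ ρ δ x ∂μHE[m]| := by
    refine (hP₁.le_setIntegral_mul_tent hρ₀ hδ (min_le_left _ _) hM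
      (j.continuous_of_finiteDimensional.const_mul σ) hMj).trans ?_
    simp only [mul_assoc, integral_const_mul]
    exact (le_abs_self _).trans (by rw [abs_mul, hσ, one_mul])
  have hlinear (c : ℝ) (φ : Euc (m + 1) → ℝ) :
      ∫ x in T₁ ∩ T₂, j x * (c • φ) x ∂μHE[m] = c * ∫ x in T₁ ∩ T₂, j x * φ x ∂μHE[m] := by
    simp only [Pi.smul_apply, smul_eq_mul, mul_left_comm, integral_const_mul]
  refine (ENNReal.ofReal_le_ofReal ?_).trans (ofReal_abs_div_sqrt_le_dualNorm hlinear
    (isTest_tent hP.norm_normal hδ (min_le_left _ _) hP₁.ball_subset_interior) (by positivity)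
    (energySq_tent_le hP.norm_normal hδ (min_le_left _ _) hκ (min_le_right _ _)
      hP.isBounded_interior_union))
  exact sqrt_mul_sqrt_mul_sqrt_le_div_sqrt (by positivity) hh (by positivity) hw hM hδ hminδ
    (hP.setIntegral_sq_le (by positivity) hh.le hdiam hjM) htent

end FaceResidual

section AffineBasisHull

variable {ι E : Type*} [AddCommGroup E] [Module ℝ E] (b : AffineBasis ι ℝ E)

lemma coord_centroid_of_notMem {t : Finset ι} (ht : t.Nonempty) {i : ι} (hi : i ∉ t) :
    b.coord i (t.centroid ℝ b) = 0 :=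
  b.coord_apply_combination_of_notMem hi (t.sum_centroidWeights_eq_one_of_nonempty ℝ ht)

variable [Finite ι] {s : Set ι} {x : E}

lemma mem_convexHull_image_iff_coord :
    x ∈ convexHull ℝ (b '' s) ↔ (∀ i, 0 ≤ b.coord i x) ∧ ∀ i ∉ s, b.coord i x = 0 := by
  constructor
  · refine fun hx => ⟨fun i => ?_, fun i hi => ?_⟩
    · refine convexHull_min ?_ ((convex_Ici (0 : ℝ)).affine_preimage (b.coord i)) hx
      rintro _ ⟨k, -, rfl⟩
      rw [mem_preimage, b.coord_apply]
      split_ifs <;> simp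
    · refine convexHull_min ?_ ((convex_singleton (0 : ℝ)).affine_preimage (b.coord i)) hx
      rintro _ ⟨k, hk, rfl⟩
      exact b.coord_apply_ne fun hik => hi (hik ▸ hk)
  · rintro ⟨hnonneg, hzero⟩
    have := Fintype.ofFinite ι
    have hoff : ∀ i, i ∉ s.toFinset → b.coord i x = 0 := fun i hi => hzero i (by simpa using hi)
    have hsum : ∑ i ∈ s.toFinset, b.coord i x = 1 := by
      rw [Finset.sum_subset s.toFinset.subset_univ fun i _ => hoff i, b.sum_coord_apply_eq_one]
    have hcombination : ∑ i ∈ s.toFinset, b.coord i x • b i = x := by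
      rw [Finset.sum_subset s.toFinset.subset_univ fun i _ hi => by rw [hoff i hi, zero_smul],
        b.linear_combination_coord_eq_self]
    rw [← hcombination]
    exact (convex_convexHull ℝ _).sum_mem (fun i _ => hnonneg i) hsum fun i hi =>
      subset_convexHull ℝ _ (mem_image_of_mem b (mem_toFinset.1 hi))

lemma extremePoints_convexHull_image (s : Set ι) :
    (convexHull ℝ (b '' s)).extremePoints ℝ = b '' s := by
  refine extremePoints_convexHull_subset.antisymm ?_
  rintro _ ⟨i, hi, rfl⟩
  refine ⟨subset_convexHull ℝ _ (mem_image_of_mem b hi), ?_⟩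
  rintro x hx y hy ⟨p, q, hp, hq, hpq, hxy⟩
  have hxnonneg := ((mem_convexHull_image_iff_coord b).1 hx).1
  have hynonneg := ((mem_convexHull_image_iff_coord b).1 hy).1
  have hxzero : ∀ k ∉ ({i} : Set ι), b.coord k x = 0 := fun k hk => by
    have hcoord : p * b.coord k x + q * b.coord k y = 0 := by
      rw [← b.coord_apply_ne hk, ← hxy]
      exact (Convex.combo_affine_apply hpq).symm
    have hpx := mul_nonneg hp.le (hxnonneg k)
    have hqy := mul_nonneg hq.le (hynonneg k)
    exact (mul_eq_zero.1 (by linarith)).resolve_left hp.ne'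
  have hmem := (mem_convexHull_image_iff_coord b).2 ⟨hxnonneg, hxzero⟩
  rw [image_singleton, convexHull_singleton] at hmem
  exact hmem

end AffineBasisHull

section InscribedBall

variable {ι E : Type*} [Finite ι] [NormedAddCommGroup E] [NormedSpace ℝ E]
  (b : AffineBasis ι ℝ E) {x : E}

lemma abs_coord_sub_le {c : E} {r : ℝ} (hr : 0 < r)
    (hc : closedBall c r ⊆ convexHull ℝ (range b)) (i : ι) (x y : E) :
    |b.coord i x - b.coord i y| ≤ ‖x - y‖ / r := by
  have := Fintype.ofFinite ι
  have hunit : ∀ p ∈ closedBall c r, b.coord i p ∈ Icc (0 : ℝ) 1 := fun p hp => by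
    have hp' : ∀ k, 0 ≤ b.coord k p := by
      simpa only [b.convexHull_eq_nonneg_coord, mem_ofPred_eq] using hc hp
    refine ⟨hp' i, ?_⟩
    rw [← b.sum_coord_apply_eq_one p]
    exact Finset.single_le_sum (fun k _ => hp' k) (Finset.mem_univ i)
  have hlinear (u v : E) : (b.coord i).linear (u - v) = b.coord i u - b.coord i v :=
    (b.coord i).linearMap_vsub u v
  have hball : ∀ u ∈ closedBall (0 : E) r, ‖(b.coord i).linear u‖ ≤ 1 := fun u hu => by
    have hcu := hunit (c + u) (by simpa using hu)
    have hcc := hunit c (mem_closedBall_self hr.le)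
    rw [← add_sub_cancel_left c u, hlinear, Real.norm_eq_abs, abs_le]
    constructor <;> linarith [hcu.1, hcu.2, hcc.1, hcc.2]
  have hbound := LinearMap.bound_of_ball_bound' hr 1 _ hball (x - y)
  rwa [hlinear, Real.norm_eq_abs, one_div_mul_eq_div] at hbound

lemma le_dist_of_closedBall_subset {c : E} {r : ℝ} (hr : 0 < r)
    (hc : closedBall c r ⊆ convexHull ℝ (range b)) {i k : ι} (hik : i ≠ k) :
    r ≤ dist (b i) (b k) := by
  have hle := abs_coord_sub_le b hr hc i (b i) (b k)
  rw [b.coord_apply_eq, b.coord_apply_ne hik, sub_zero, abs_one, le_div_iff₀ hr, one_mul] at hle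
  rwa [dist_eq_norm]

lemma coord_pos_of_mem_ball_centroid {c : E} {r : ℝ} (hr : 0 < r)
    (hc : closedBall c r ⊆ convexHull ℝ (range b)) {t : Finset ι} {i : ι} (hi : i ∈ t)
    (hx : x ∈ ball (t.centroid ℝ b) (r / t.card)) : 0 < b.coord i x := by
  have hle := abs_coord_sub_le b hr hc i x (t.centroid ℝ b)
  have hlt : ‖x - t.centroid ℝ b‖ / r < (t.card : ℝ)⁻¹ := by
    rw [div_lt_iff₀ hr, inv_mul_eq_div, ← dist_eq_norm]
    exact hx
  rw [b.coord_apply_centroid hi] at hle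
  linarith [(abs_le.1 hle).1]

end InscribedBall

lemma apply_lineMap_neg_one {E : Type*} [AddCommGroup E] [Module ℝ E] (f : E →ᵃ[ℝ] ℝ) {x₀ : E}
    (hx₀ : f x₀ = 0) (x : E) : f (AffineMap.lineMap x₀ x (-1 : ℝ)) = -f x := by
  rw [AffineMap.apply_lineMap, hx₀, AffineMap.lineMap_apply_ring]
  ring

lemma exists_unit_normal {E : Type*} [NormedAddCommGroup E] [InnerProductSpace ℝ E]
    [FiniteDimensional ℝ E] (f : E →ᵃ[ℝ] ℝ) {x₀ y : E} (hx₀ : f x₀ = 0) (hy : f y ≠ 0) :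
    ∃ n : E, ‖n‖ = 1 ∧ ∀ x, ⟪n, x - x₀⟫ = 0 ↔ f x = 0 := by
  have := FiniteDimensional.complete ℝ E
  set g : E := (InnerProductSpace.toDual ℝ E).symm f.linear.toContinuousLinearMap with hg
  have hinner (x : E) : ⟪g, x - x₀⟫ = f x := by
    rw [hg, InnerProductSpace.toDual_symm_apply, LinearMap.coe_toContinuousLinearMap']
    simpa only [vsub_eq_sub, hx₀, sub_zero] using f.linearMap_vsub x x₀
  have hg₀ : g ≠ 0 := fun h => hy (by rw [← hinner, h, inner_zero_left])
  refine ⟨‖g‖⁻¹ • g, norm_smul_inv_norm hg₀, fun x => ?_⟩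
  rw [real_inner_smul_left, hinner, mul_eq_zero,
    or_iff_right (inv_ne_zero (norm_ne_zero_iff.2 hg₀))]

section Inradius

variable {d : ℕ} {s : Set (Euc d)}

lemma inradius_nonneg (s : Set (Euc d)) : 0 ≤ inradius s :=
  Real.sSup_nonneg' ⟨0, ⟨0, by simp⟩, le_rfl⟩

lemma diam_le_max_mul_inradius {μ : ℝ} (h : diam s ≤ μ * inradius s) (ν : ℝ) :
    diam s ≤ max μ ν * inradius s :=
  h.trans (mul_le_mul_of_nonneg_right (le_max_left μ ν) (inradius_nonneg s))

lemma exists_closedBall_half_inradius_subset (hs : 0 < inradius s) :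
    ∃ c, closedBall c (inradius s / 2) ⊆ s := by
  obtain ⟨r, ⟨c, hc⟩, hr⟩ := exists_lt_of_lt_csSup
    (s := {r | ∃ c, ball c r ⊆ s}) ⟨0, 0, by simp⟩ (half_lt_self hs)
  exact ⟨c, (closedBall_subset_ball hr).trans hc⟩

lemma exists_closedBall_subset_of_diam_le {μ : ℝ} (hs : 0 < diam s)
    (hμ : diam s ≤ μ * inradius s) :
    ∃ c r, 0 < r ∧ diam s ≤ 2 * μ * r ∧ closedBall c r ⊆ s := by
  have hin : 0 < inradius s := (inradius_nonneg s).lt_of_ne fun h => by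
    rw [← h, mul_zero] at hμ
    exact hμ.not_gt hs
  obtain ⟨c, hc⟩ := exists_closedBall_half_inradius_subset hin
  exact ⟨c, inradius s / 2, half_pos hin, by linarith, hc⟩

end Inradius

section SimplexPatch

variable {d : ℕ} {B B₁ B₂ : AffineBasis (Fin (d + 1)) ℝ (Euc d)} {z z₁ z₂ : Fin (d + 1)}
  {x : Euc d}

lemma mem_simT : x ∈ simT B ↔ ∀ i, 0 ≤ B.coord i x := by
  rw [simT, B.convexHull_eq_nonneg_coord, mem_ofPred_eq]

lemma mem_simFace : x ∈ simFace B z ↔ x ∈ simT B ∧ B.coord z x = 0 := by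
  rw [simFace, mem_convexHull_image_iff_coord, mem_simT]
  simp

lemma isCompact_simT (B : AffineBasis (Fin (d + 1)) ℝ (Euc d)) : IsCompact (simT B) :=
  (finite_range B).isCompact_convexHull ℝ

lemma mem_simT_of_ne (hx : ∀ i ≠ z, 0 ≤ B.coord i x) (hz : 0 ≤ B.coord z x) : x ∈ simT B :=
  mem_simT.2 fun i => (eq_or_ne i z).elim (fun h => h ▸ hz) (hx i)

lemma exists_isFacePatch_of_coord_nonneg (hF₁ : simT B₁ ∩ simT B₂ = simFace B₁ z₁)
    (hF₂ : simT B₁ ∩ simT B₂ = simFace B₂ z₂) {x₀ : Euc d} {r : ℝ}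
    (hx₀ : x₀ ∈ simT B₁ ∩ simT B₂) (hB₁ : ∀ x ∈ ball x₀ r, ∀ i ≠ z₁, 0 ≤ B₁.coord i x)
    (hB₂ : ∀ x ∈ ball x₀ r, ∀ i ≠ z₂, 0 ≤ B₂.coord i x) :
    ∃ n, IsFacePatch (simT B₁) (simT B₂) x₀ n r := by
  have hz₁ : B₁.coord z₁ x₀ = 0 := (mem_simFace.1 (hF₁ ▸ hx₀)).2
  have hz₂ : B₂.coord z₂ x₀ = 0 := (mem_simFace.1 (hF₂ ▸ hx₀)).2
  obtain ⟨n, hn, hnormal⟩ := exists_unit_normal (B₁.coord z₁) hz₁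
    (y := B₁ z₁) (by rw [B₁.coord_apply_eq]; exact one_ne_zero)
  refine ⟨n, ⟨convex_convexHull ℝ _, convex_convexHull ℝ _, isCompact_simT B₁, isCompact_simT B₂,
    hn, fun x hx => (hnormal x).2 (mem_simFace.1 (hF₁ ▸ hx)).2, fun x hx hxn => ?_, fun x hx => ?_⟩⟩
  · rw [hF₁, mem_simFace]
    have hxz := (hnormal x).1 hxn
    exact ⟨mem_simT_of_ne (hB₁ x hx) hxz.ge, hxz⟩
  -- A point of the ball outside both simplices would reflect through `x₀` into both, but off
  -- their common face.
  · by_contra hcon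
    obtain ⟨hx₁, hx₂⟩ := not_or.1 hcon
    have hneg₁ : B₁.coord z₁ x < 0 := not_le.1 fun h => hx₁ (mem_simT_of_ne (hB₁ x hx) h)
    have hneg₂ : B₂.coord z₂ x < 0 := not_le.1 fun h => hx₂ (mem_simT_of_ne (hB₂ x hx) h)
    set y : Euc d := AffineMap.lineMap x₀ x (-1 : ℝ)
    have hy : y ∈ ball x₀ r := by
      rw [mem_ball, dist_lineMap_left, norm_neg, norm_one, one_mul, dist_comm]
      exact hx
    have hcoord₁ : B₁.coord z₁ y = -B₁.coord z₁ x := apply_lineMap_neg_one _ hz₁ x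
    have hcoord₂ : B₂.coord z₂ y = -B₂.coord z₂ x := apply_lineMap_neg_one _ hz₂ x
    have hyF : y ∈ simT B₁ ∩ simT B₂ :=
      ⟨mem_simT_of_ne (hB₁ y hy) (by linarith), mem_simT_of_ne (hB₂ y hy) (by linarith)⟩
    linarith [(mem_simFace.1 (hF₁ ▸ hyF)).2]

/-- The barycentre of the face of the simplex `B` opposite to the vertex `z`. -/
def faceCentroid (B : AffineBasis (Fin (d + 1)) ℝ (Euc d)) (z : Fin (d + 1)) : Euc d :=
  (Finset.univ.erase z).centroid ℝ B

lemma coe_univ_erase : ((Finset.univ.erase z : Finset (Fin (d + 1))) : Set (Fin (d + 1)))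
    = {y | y ≠ z} := by
  ext
  simp

lemma card_univ_erase (z : Fin (d + 1)) : (Finset.univ.erase z).card = d := by
  rw [Finset.card_erase_of_mem (Finset.mem_univ z), Finset.card_univ, Fintype.card_fin,
    Nat.add_sub_cancel]

lemma faceCentroid_eq_of_simFace_eq (h : simFace B₁ z₁ = simFace B₂ z₂) :
    faceCentroid B₁ z₁ = faceCentroid B₂ z₂ := by
  have hvertices : B₁ '' {y | y ≠ z₁} = B₂ '' {y | y ≠ z₂} := by
    rw [← extremePoints_convexHull_image B₁, ← extremePoints_convexHull_image B₂]
    exact congrArg (extremePoints ℝ) h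
  refine Finset.centroid_eq_of_inj_on_of_image_eq ℝ _ _ (fun _ _ _ _ h => B₁.ind.injective h)
    (fun _ _ _ _ h => B₂.ind.injective h) ?_
  rwa [coe_univ_erase, coe_univ_erase]

lemma coord_pos_of_mem_ball_faceCentroid {c : Euc d} {r : ℝ} (hr : 0 < r)
    (hc : closedBall c r ⊆ simT B) (hx : x ∈ ball (faceCentroid B z) (r / d)) {i : Fin (d + 1)}
    (hi : i ≠ z) : 0 < B.coord i x :=
  coord_pos_of_mem_ball_centroid B hr hc (Finset.mem_erase.2 ⟨hi, Finset.mem_univ i⟩)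
    (by rwa [card_univ_erase])

lemma faceCentroid_mem_simFace (hd : 0 < d) (B : AffineBasis (Fin (d + 1)) ℝ (Euc d))
    (z : Fin (d + 1)) : faceCentroid B z ∈ simFace B z := by
  have hne : (Finset.univ.erase z).Nonempty := Finset.card_pos.1 (by rwa [card_univ_erase])
  have hz : B.coord z (faceCentroid B z) = 0 :=
    coord_centroid_of_notMem B hne (Finset.notMem_erase z _)
  refine mem_simFace.2 ⟨mem_simT_of_ne (fun i hi => ?_) hz.ge, hz⟩
  rw [faceCentroid, B.coord_apply_centroid (Finset.mem_erase.2 ⟨hi, Finset.mem_univ i⟩)]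
  positivity

lemma le_diam_of_simFace_subset (hd : 2 ≤ d) {c : Euc d} {r : ℝ} (hr : 0 < r)
    (hc : closedBall c r ⊆ simT B) {S : Set (Euc d)} (hS : Bornology.IsBounded S)
    (hFS : simFace B z ⊆ S) : r ≤ diam S := by
  obtain ⟨i, hi, k, hk, hik⟩ := Finset.one_lt_card.1
    (show 1 < (Finset.univ.erase z).card by rw [card_univ_erase]; exact hd)
  have hvertex {l : Fin (d + 1)} (hl : l ∈ Finset.univ.erase z) : B l ∈ S :=
    hFS (subset_convexHull ℝ _ (mem_image_of_mem B (Finset.ne_of_mem_erase hl)))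
  exact (le_dist_of_closedBall_subset B hr hc hik).trans
    (dist_le_diam_of_mem hS (hvertex hi) (hvertex hk))

lemma diam_simT_pos (hd : 0 < d) (B : AffineBasis (Fin (d + 1)) ℝ (Euc d)) : 0 < diam (simT B) := by
  have : NeZero d := ⟨hd.ne'⟩
  have hne : B 0 ≠ B (Fin.last d) := B.ind.injective.ne Fin.last_pos'.ne
  exact (dist_pos.2 hne).trans_le (dist_le_diam_of_mem (isCompact_simT B).isBounded
    (subset_convexHull ℝ _ (mem_range_self _)) (subset_convexHull ℝ _ (mem_range_self _)))

lemma max_le_four_mul_sq_mul {μ D₁ D₂ r₁ r₂ : ℝ} (hμ : 1 ≤ μ) (hr₁ : 0 ≤ r₁)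
    (hD₁ : D₁ ≤ 2 * μ * r₁) (hD₂ : D₂ ≤ 2 * μ * r₂) (hr₂ : r₂ ≤ D₁) :
    max D₁ D₂ ≤ 4 * μ ^ 2 * r₁ := by
  refine max_le ?_ ?_
  · calc D₁ ≤ 2 * μ * r₁ := hD₁
      _ ≤ 4 * μ ^ 2 * r₁ := by gcongr ?_ * _; nlinarith
  · calc D₂ ≤ 2 * μ * r₂ := hD₂
      _ ≤ 2 * μ * (2 * μ * r₁) := by gcongr; exact hr₂.trans hD₁
      _ = 4 * μ ^ 2 * r₁ := by ring

theorem exists_isFacePatch_of_diam_le {μ : ℝ} (hd : 2 ≤ d) (hμ : 1 ≤ μ)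
    (hshape₁ : diam (simT B₁) ≤ μ * inradius (simT B₁))
    (hshape₂ : diam (simT B₂) ≤ μ * inradius (simT B₂))
    (hF₁ : simT B₁ ∩ simT B₂ = simFace B₁ z₁) (hF₂ : simT B₁ ∩ simT B₂ = simFace B₂ z₂) :
    ∃ x₀ n, IsFacePatch (simT B₁) (simT B₂) x₀ n
      ((4 * d * μ ^ 2)⁻¹ * max (diam (simT B₁)) (diam (simT B₂))) := by
  obtain ⟨c₁, r₁, hr₁, hdiam₁, hc₁⟩ :=
    exists_closedBall_subset_of_diam_le (diam_simT_pos (by omega) B₁) hshape₁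
  obtain ⟨c₂, r₂, hr₂, hdiam₂, hc₂⟩ :=
    exists_closedBall_subset_of_diam_le (diam_simT_pos (by omega) B₂) hshape₂
  have hr₁D₂ : r₁ ≤ diam (simT B₂) := le_diam_of_simFace_subset hd hr₁ hc₁
    (isCompact_simT B₂).isBounded (hF₁ ▸ inter_subset_right)
  have hr₂D₁ : r₂ ≤ diam (simT B₁) := le_diam_of_simFace_subset hd hr₂ hc₂
    (isCompact_simT B₁).isBounded (hF₂ ▸ inter_subset_left)
  set h : ℝ := max (diam (simT B₁)) (diam (simT B₂))
  have hradius {r : ℝ} (hr : h ≤ 4 * μ ^ 2 * r) : (4 * d * μ ^ 2)⁻¹ * h ≤ r / d := by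
    rw [inv_mul_le_iff₀ (by positivity)]
    refine hr.trans_eq ?_
    field_simp
  have hh₁ : h ≤ 4 * μ ^ 2 * r₁ := max_le_four_mul_sq_mul hμ hr₁.le hdiam₁ hdiam₂ hr₂D₁
  have hh₂ : h ≤ 4 * μ ^ 2 * r₂ :=
    (max_comm _ _).trans_le (max_le_four_mul_sq_mul hμ hr₂.le hdiam₂ hdiam₁ hr₁D₂)
  refine ⟨faceCentroid B₁ z₁, exists_isFacePatch_of_coord_nonneg hF₁ hF₂
    (hF₁ ▸ faceCentroid_mem_simFace (by omega) B₁ z₁) (fun x hx i hi => ?_) fun x hx i hi => ?_⟩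
  · exact (coord_pos_of_mem_ball_faceCentroid hr₁ hc₁ (ball_subset_ball (hradius hh₁) hx) hi).le
  · rw [faceCentroid_eq_of_simFace_eq (hF₁.symm.trans hF₂)] at hx
    exact (coord_pos_of_mem_ball_faceCentroid hr₂ hc₂ (ball_subset_ball (hradius hh₂) hx) hi).le

end SimplexPatch

lemma exists_setIntegral_hausdorffMeasure_eq (X : Type*) [EMetricSpace X] [MeasurableSpace X]
    [BorelSpace X] (m : ℕ) : ∃ α : ℝ, 0 < α ∧ ∀ (F : Set X) (f : X → ℝ),
      ∫ x in F, f x ∂μH[(m : ℝ)] = α * ∫ x in F, f x ∂μHE[m] := by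
  have hβ := Measure.addHaarScalarFactor_volume_hausdorffMeasure_ne_zero m
  set β : ℝ≥0 := Measure.addHaarScalarFactor (volume : Measure (Euc m)) μH[m]
  refine ⟨(β : ℝ)⁻¹, by positivity, fun F f => ?_⟩
  have hdef : (μHE[m] : Measure X) = β • μH[m] := Measure.euclideanHausdorffMeasure_def m
  rw [hdef, Measure.restrict_smul, integral_smul_nnreal_measure, NNReal.smul_def, smul_eq_mul,
    inv_mul_cancel_left₀ (NNReal.coe_ne_zero.2 hβ)]

lemma ofReal_sqrt_mul_mul_sqrt {α : ℝ} (hα : 0 ≤ α) (a I : ℝ) :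
    ENNReal.ofReal (√α * (a * √(α * I))) = ENNReal.ofReal α * ENNReal.ofReal (a * √I) := by
  rw [← ENNReal.ofReal_mul hα, Real.sqrt_mul hα]
  congr 1
  linear_combination a * √I * Real.mul_self_sqrt hα

/-- two-sided robust bound for the face residual. For two simplices
`T₁, T₂` with disjoint interiors sharing the common face `F = T₁ ∩ T₂`, each with shape
parameter `≤ μ`, and every affine `j`, the dual energy norm over the patch
`ω_F = int (T₁ ∪ T₂)` of `φ ↦ ∫_F j φ dH^{d−1}` is equivalent to
`min{h, κ⁻¹}^{1/2} ‖j‖_{L²(F)}`, with constants depending only on `d` and `μ`. -/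
theorem face_residual_two_sided (d : ℕ) (hd : 2 ≤ d) (μ : ℝ) :
    ∃ c C : ℝ, 0 < c ∧ 0 < C ∧ ∀ κ : ℝ, 0 < κ →
      ∀ B₁ B₂ : AffineBasis (Fin (d + 1)) ℝ (Euc d),
        interior (simT B₁) ∩ interior (simT B₂) = ∅ →
        Metric.diam (simT B₁) ≤ μ * inradius (simT B₁) →
        Metric.diam (simT B₂) ≤ μ * inradius (simT B₂) →
        ∀ z₁ z₂ : Fin (d + 1),
          simT B₁ ∩ simT B₂ = simFace B₁ z₁ →
          simT B₁ ∩ simT B₂ = simFace B₂ z₂ →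
          ∀ j : Euc d →ᵃ[ℝ] ℝ,
            ENNReal.ofReal (c
                * Real.sqrt (min (max (Metric.diam (simT B₁)) (Metric.diam (simT B₂))) κ⁻¹)
                * Real.sqrt (∫ x in simT B₁ ∩ simT B₂, (j x) ^ 2 ∂(μH[(d : ℝ) - 1])))
              ≤ dualNorm κ (interior (simT B₁ ∪ simT B₂))
                  (fun φ => ∫ x in simT B₁ ∩ simT B₂, j x * φ x ∂(μH[(d : ℝ) - 1])) ∧
            dualNorm κ (interior (simT B₁ ∪ simT B₂))
                (fun φ => ∫ x in simT B₁ ∩ simT B₂, j x * φ x ∂(μH[(d : ℝ) - 1]))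
              ≤ ENNReal.ofReal (C
                  * Real.sqrt (min (max (Metric.diam (simT B₁)) (Metric.diam (simT B₂))) κ⁻¹)
                  * Real.sqrt (∫ x in simT B₁ ∩ simT B₂, (j x) ^ 2 ∂(μH[(d : ℝ) - 1]))) := by
  obtain ⟨m, rfl⟩ : ∃ m, d = m + 1 := ⟨d - 1, by omega⟩
  obtain ⟨α, hα, hμH⟩ := exists_setIntegral_hausdorffMeasure_eq (Euc (m + 1)) m
  set q : ℝ := (4 * (m + 1 : ℕ) * max μ 1 ^ 2)⁻¹
  have hμ : 1 ≤ max μ 1 := le_max_right μ 1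
  have hq : 0 < q := by positivity
  have hq₁ : q ≤ 1 := inv_le_one_of_one_le₀ (by push_cast; nlinarith)
  refine ⟨√α * √((q / 4) ^ (m + 1) / (160 * 4 ^ m)), √α, by positivity, by positivity,
    fun κ hκ B₁ B₂ _ hshape₁ hshape₂ z₁ z₂ hF₁ hF₂ j => ?_⟩
  obtain ⟨x₀, n, hP⟩ := exists_isFacePatch_of_diam_le hd hμ
    (diam_le_max_mul_inradius hshape₁ 1) (diam_le_max_mul_inradius hshape₂ 1) hF₁ hF₂
  have hh : 0 < max (diam (simT B₁)) (diam (simT B₂)) :=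
    lt_max_of_lt_left (diam_simT_pos m.succ_pos B₁)
  rw [show (((m + 1 : ℕ) : ℝ) - 1) = m by push_cast; ring]
  simp only [hμH, dualNorm_const_mul hα.le, mul_assoc (√α), ofReal_sqrt_mul_mul_sqrt hα.le]
  constructor
  · gcongr
    exact hP.le_dualNorm hq hq₁ hκ hh (le_max_left _ _) j
  · gcongr
    exact hP.dualNorm_le hκ hh (le_max_left _ _) (le_max_right _ _)
      j.continuous_of_finiteDimensional
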